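/- arXiv:1810.11636 — 8 statements merged into one kernel-verified Lean document; each statement's English description precedes it below -/
import Mathlib

section
/- Let f : ℝⁿ → ℝⁿ be locally Lipschitz and regular at p* ∈ ℝⁿ, i.e. every V ∈ ∂f(p*) is invertible, and let λ ≥ max{‖V⁻¹‖ : V ∈ ∂f(p*)}. Then for every ε > 0 with ελ < 1 there exists δ > 0 such that f is regular on B_δ(p*) (every element of ∂f(q) for q ∈ B_δ(p*) is invertible) and ‖V⁻¹‖ ≤ λ / (1 − ελ) for all q ∈ B_δ(p*) and all V ∈ ∂f(q). -/
open Metric Filter Topology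

noncomputable section

/-- The Clarke generalized Jacobian of `f : ℝⁿ → ℝⁿ` at `p`: the convex hull of all limits
of Jacobians `Df(p_k)` along sequences of differentiability points `p_k → p`. -/
def clarkeJacobian {n : ℕ} (f : EuclideanSpace ℝ (Fin n) → EuclideanSpace ℝ (Fin n))
    (p : EuclideanSpace ℝ (Fin n)) :
    Set (EuclideanSpace ℝ (Fin n) →L[ℝ] EuclideanSpace ℝ (Fin n)) :=
  convexHull ℝ {H | ∃ u : ℕ → EuclideanSpace ℝ (Fin n),
    (∀ k, DifferentiableAt ℝ f (u k)) ∧ Tendsto u atTop (𝓝 p) ∧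
    Tendsto (fun k => fderiv ℝ f (u k)) atTop (𝓝 H)}

/-!
Near `p` the derivatives of a Lipschitz map stay in a compact ball, so their cluster points depend
upper hemicontinuously on the base point. Since thickenings of convex sets are convex, for `q` close
to `p` every `V ∈ ∂f(q)` is within `ε` of some `W ∈ ∂f(p)`. The identity
`V⁻¹ - W⁻¹ = V⁻¹ (W - V) W⁻¹` then bounds `‖V⁻¹‖` by `‖W⁻¹‖ / (1 - ε ‖W⁻¹‖)`.
-/

section NormedRing

variable {R : Type*} [NormedRing R] {V W : R}

theorem isUnit_of_norm_sub_mul_norm_inverse_lt_one [HasSummableGeomSeries R] (hW : IsUnit W)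
    (h : ‖V - W‖ * ‖Ring.inverse W‖ < 1) : IsUnit V := by
  have hsmall : ‖(W - V) * Ring.inverse W‖ < 1 :=
    (norm_mul_le _ _).trans_lt (by rwa [norm_sub_rev])
  have hfactor : V = (1 - (W - V) * Ring.inverse W) * W := by
    rw [sub_mul, one_mul, mul_assoc, Ring.inverse_mul_cancel _ hW, mul_one, sub_sub_cancel]
  rw [hfactor]
  exact (isUnit_one_sub_of_norm_lt_one hsmall).mul hW

theorem norm_inverse_le_div_one_sub (hV : IsUnit V) (hW : IsUnit W)
    (h : ‖V - W‖ * ‖Ring.inverse W‖ < 1) :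
    ‖Ring.inverse V‖ ≤ ‖Ring.inverse W‖ / (1 - ‖V - W‖ * ‖Ring.inverse W‖) := by
  have hbound : ‖Ring.inverse V‖ - ‖Ring.inverse W‖ ≤
      ‖Ring.inverse V‖ * ‖V - W‖ * ‖Ring.inverse W‖ := calc
    _ ≤ ‖Ring.inverse V - Ring.inverse W‖ := norm_sub_norm_le _ _
    _ = ‖Ring.inverse V * (W - V) * Ring.inverse W‖ := by
      rw [Ring.inverse_sub_inverse (iff_of_true hV hW)]
    _ ≤ _ := by
      rw [norm_sub_rev V W]
      exact norm_mul₃_le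
  rw [le_div_iff₀ (sub_pos.2 h)]
  linarith

end NormedRing

section UpperHemicontinuity

variable {X : Type*} [TopologicalSpace X] {p : X}

theorem upperHemicontinuousAt_mapClusterPt_nhdsWithin {Y : Type*} [TopologicalSpace Y]
    [RegularSpace Y] {u : X → Y} {D : Set X} {K : Set Y} (hK : IsCompact K)
    (hu : ∀ᶠ x in 𝓝[D] p, u x ∈ K) :
    UpperHemicontinuousAt (fun q ↦ {y | MapClusterPt y (𝓝[D] q) u}) p := by
  rw [upperHemicontinuousAt_iff_forall_isOpen]
  intro U hU hCU
  set C := {y | MapClusterPt y (𝓝[D] p) u}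
  have hCK : C ⊆ closure K := fun y hy ↦
    isClosed_closure.mem_of_mapClusterPt hy (hu.mono fun _ hx ↦ subset_closure hx)
  have hC : IsCompact C := hK.closure.of_isClosed_subset isClosed_setOfPred_clusterPt hCK
  have htendsto : Tendsto u (𝓝[D] p) (𝓝ˢ C) :=
    hK.tendsto_nhdsSet_of_mapClusterPt hu fun _ _ hy ↦ hy
  obtain ⟨T, hT, hCT, hTU⟩ := hC.exists_isOpen_closure_subset (hU.mem_nhdsSet.2 hCU)
  have huT : ∀ᶠ x in 𝓝[D] p, u x ∈ T := htendsto (hT.mem_nhdsSet.2 hCT)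
  filter_upwards [eventually_nhds_nhdsWithin.2 huT] with q hq y hy
  exact hTU <| isClosed_closure.mem_of_mapClusterPt hy (hq.mono fun _ hx ↦ subset_closure hx)

theorem eventually_convexHull_subset_thickening {E : Type*} [SeminormedAddCommGroup E]
    [NormedSpace ℝ E] {S : X → Set E} (hS : UpperHemicontinuousAt S p) {ε : ℝ} (hε : 0 < ε) :
    ∀ᶠ q in 𝓝 p, convexHull ℝ (S q) ⊆ thickening ε (convexHull ℝ (S p)) := by
  filter_upwards [hS _ (thickening_mem_nhdsSet (S p) hε)] with q hq
  refine convexHull_min ?_ ((convex_convexHull ℝ _).thickening ε)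
  exact (subset_of_mem_nhdsSet hq).trans (thickening_subset_of_subset ε (subset_convexHull ℝ _))

end UpperHemicontinuity

section BouligandJacobian

variable {E F : Type*} [NormedAddCommGroup E] [NormedSpace ℝ E]
  [NormedAddCommGroup F] [NormedSpace ℝ F]

/-- The Bouligand (limiting) Jacobian of `f` at `p`, whose convex hull is the Clarke generalized
Jacobian. It is encoded by cluster points rather than by sequences so that compactness applies
directly; see `mem_bouligandJacobian_iff_exists_seq`. -/
def bouligandJacobian (f : E → F) (p : E) : Set (E →L[ℝ] F) :=
  {H | MapClusterPt H (𝓝[{x | DifferentiableAt ℝ f x}] p) (fderiv ℝ f)}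

theorem mem_bouligandJacobian_iff_exists_seq {f : E → F} {p : E} {H : E →L[ℝ] F} :
    H ∈ bouligandJacobian f p ↔ ∃ u : ℕ → E, (∀ k, DifferentiableAt ℝ f (u k)) ∧
      Tendsto u atTop (𝓝 p) ∧ Tendsto (fun k ↦ fderiv ℝ f (u k)) atTop (𝓝 H) := by
  constructor
  · intro hH
    obtain ⟨u, hderiv, hu⟩ := MapClusterPt.exists_seq_tendsto hH
    obtain ⟨hup, hdiff⟩ := tendsto_nhdsWithin_iff.1 hu
    obtain ⟨N, hN⟩ := eventually_atTop.1 hdiff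
    have hshift := tendsto_add_atTop_nat N
    exact ⟨fun k ↦ u (k + N), fun k ↦ hN _ (Nat.le_add_left N k), hup.comp hshift,
      hderiv.comp hshift⟩
  · rintro ⟨u, hdiff, hup, hderiv⟩
    exact .of_comp (tendsto_nhdsWithin_iff.2 ⟨hup, .of_forall hdiff⟩) hderiv.mapClusterPt

theorem clarkeJacobian_eq_convexHull_bouligandJacobian {n : ℕ}
    (f : EuclideanSpace ℝ (Fin n) → EuclideanSpace ℝ (Fin n)) (p : EuclideanSpace ℝ (Fin n)) :
    clarkeJacobian f p = convexHull ℝ (bouligandJacobian f p) :=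
  congrArg _ (Set.ext fun _ ↦ mem_bouligandJacobian_iff_exists_seq.symm)

theorem upperHemicontinuousAt_bouligandJacobian [FiniteDimensional ℝ E] [FiniteDimensional ℝ F]
    {f : E → F} {p : E} {K : NNReal} {s : Set E} (hs : s ∈ 𝓝 p) (hf : LipschitzOnWith K f s) :
    UpperHemicontinuousAt (bouligandJacobian f) p := by
  refine upperHemicontinuousAt_mapClusterPt_nhdsWithin
    (isCompact_closedBall (0 : E →L[ℝ] F) K) (eventually_nhdsWithin_of_eventually_nhds ?_)
  filter_upwards [eventually_mem_nhds_iff.2 hs] with x hx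
  exact mem_closedBall_zero_iff.2 (norm_fderiv_le_of_lipschitzOn ℝ hx hf)

end BouligandJacobian

theorem regular_near_regular_point_general {E : Type*} [NormedAddCommGroup E] [NormedSpace ℝ E]
    [FiniteDimensional ℝ E] {f : E → E} {p : E} {K : NNReal} {s : Set E} (hs : s ∈ 𝓝 p)
    (hf : LipschitzOnWith K f s) {lam : ℝ}
    (hreg : ∀ V ∈ convexHull ℝ (bouligandJacobian f p), IsUnit V)
    (hlam : ∀ V ∈ convexHull ℝ (bouligandJacobian f p), ‖Ring.inverse V‖ ≤ lam)
    {ε : ℝ} (hε : 0 < ε) (hεlam : ε * lam < 1) :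
    ∀ᶠ q in 𝓝 p, ∀ V ∈ convexHull ℝ (bouligandJacobian f q),
      IsUnit V ∧ ‖Ring.inverse V‖ ≤ lam / (1 - ε * lam) := by
  have husc := upperHemicontinuousAt_bouligandJacobian hs hf
  filter_upwards [eventually_convexHull_subset_thickening husc hε] with q hq V hV
  obtain ⟨W, hW, hVW⟩ := mem_thickening_iff.1 (hq hV)
  have hWlam : ‖Ring.inverse W‖ ≤ lam := hlam W hW
  have hlam_nonneg : 0 ≤ lam := (norm_nonneg _).trans hWlam
  have hclose : ‖V - W‖ * ‖Ring.inverse W‖ ≤ ε * lam := by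
    rw [← dist_eq_norm]
    gcongr
  have hsmall := hclose.trans_lt hεlam
  have hVunit : IsUnit V := isUnit_of_norm_sub_mul_norm_inverse_lt_one (hreg W hW) hsmall
  refine ⟨hVunit, (norm_inverse_le_div_one_sub hVunit (hreg W hW) hsmall).trans ?_⟩
  gcongr

/-- A locally Lipschitz map that is regular at `p*` (every element of the Clarke generalized
Jacobian is invertible) is regular near `p*`, with a uniform bound on the inverses. -/
theorem regular_near_regular_point {n : ℕ}
    (f : EuclideanSpace ℝ (Fin n) → EuclideanSpace ℝ (Fin n)) (hf : LocallyLipschitz f)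
    (pstar : EuclideanSpace ℝ (Fin n)) (lam : ℝ)
    (hreg : ∀ V ∈ clarkeJacobian f pstar, IsUnit V)
    (hlam : ∀ V ∈ clarkeJacobian f pstar, ‖Ring.inverse V‖ ≤ lam) :
    ∀ ε > (0 : ℝ), ε * lam < 1 →
      ∃ δ > (0 : ℝ), ∀ q ∈ ball pstar δ, ∀ V ∈ clarkeJacobian f q,
        IsUnit V ∧ ‖Ring.inverse V‖ ≤ lam / (1 - ε * lam) := by
  intro ε hε hεlam
  obtain ⟨K, s, hs, hfs⟩ := hf pstar
  simp only [clarkeJacobian_eq_convexHull_bouligandJacobian] at hreg hlam ⊢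
  exact eventually_nhds_iff_ball.1
    (regular_near_regular_point_general hs hfs hreg hlam hε hεlam)
end
end

section
/- Let f : ℝⁿ → ℝⁿ be locally Lipschitz, let x* satisfy f(x*) = 0, and let δ > 0, λ > 0, ε > 0 and μ ∈ [0, 1] with ελ < 1 be such that for all p ∈ B_δ(x*) and all V ∈ ∂f(p): V is invertible, ‖V⁻¹‖ ≤ λ/(1 − ελ), and ‖f(x*) − f(p) − V(x* − p)‖ ≤ ε‖p − x*‖^{1+μ}. Then for all p ∈ B_δ(x*) and all V ∈ ∂f(p), the Newton update satisfies ‖(p − V⁻¹ f(p)) − x*‖ ≤ (ελ/(1 − ελ)) · ‖p − x*‖^{1+μ}. Moreover, if in addition ελ(1 + δ^μ) < 1, then the Newton iteration map p ↦ p − V⁻¹f(p) maps B_δ(x*) into B_δ(x*). -/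
open Metric Filter Topology

noncomputable section

/-!
Since `f x = 0`, the error of a Newton step is the linearization residual pulled back by the
inverse: `p - V⁻¹ f(p) - x = V⁻¹ (f(x) - f(p) - V (x - p))`. Bounding the two factors gives the
estimate with constant `c = ελ / (1 - ελ)`. The condition `ελ (1 + δ^μ) < 1` says exactly that
`c δ^μ < 1`, and then `c r^(1+μ) = (c r^μ) r ≤ r` for `r ≤ δ`, so the step does not increase the
distance to `x`.
-/

theorem leftInverse_ringInverse {R M : Type*} [Semiring R] [TopologicalSpace M]
    [AddCommMonoid M] [Module R M] {V : M →L[R] M} (hV : IsUnit V) :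
    Function.LeftInverse (Ring.inverse V : M →L[R] M) V := fun w =>
  congrArg (fun T : M →L[R] M => T w) (Ring.inverse_mul_cancel V hV)

theorem newton_step_sub_eq {A E F : Type*} [AddCommGroup E] [AddCommGroup F] [FunLike A F E]
    [AddMonoidHomClass A F E] {f : E → F} {x : E} (hx : f x = 0) {B : A} {V : E → F}
    (hBV : Function.LeftInverse B V) (p : E) :
    p - B (f p) - x = B (f x - f p - V (x - p)) := by
  rw [map_sub, hBV, hx, zero_sub, map_neg]
  abel

theorem norm_newton_step_sub_le {𝕜 E F : Type*} [NontriviallyNormedField 𝕜]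
    [SeminormedAddCommGroup E] [NormedSpace 𝕜 E] [SeminormedAddCommGroup F] [NormedSpace 𝕜 F]
    {f : E → F} {x : E} (hx : f x = 0) {B : F →L[𝕜] E} {V : E → F}
    (hBV : Function.LeftInverse B V) (p : E) :
    ‖p - B (f p) - x‖ ≤ ‖B‖ * ‖f x - f p - V (x - p)‖ := by
  rw [newton_step_sub_eq hx hBV]
  exact B.le_opNorm _

theorem mul_rpow_one_add_le_self {c r δ μ : ℝ} (hr : 0 ≤ r) (hrδ : r ≤ δ) (hμ : 0 ≤ μ)
    (hc : c * δ ^ μ ≤ 1) : c * r ^ (1 + μ) ≤ r := by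
  have hcr : c * r ^ μ ≤ 1 := by
    rcases le_total 0 c with hc0 | hc0
    · exact (mul_le_mul_of_nonneg_left (Real.rpow_le_rpow hr hrδ hμ) hc0).trans hc
    · exact (mul_nonpos_of_nonpos_of_nonneg hc0 (Real.rpow_nonneg hr μ)).trans zero_le_one
  calc c * r ^ (1 + μ) = c * r ^ μ * r := by
        rw [Real.rpow_one_add' hr (by positivity)]
        ring
    _ ≤ r := mul_le_of_le_one_left hr hcr

theorem mem_ball_of_dist_le_mul_rpow {X : Type*} [PseudoMetricSpace X] {x p q : X} {c δ μ : ℝ}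
    (hμ : 0 ≤ μ) (hc : c * δ ^ μ ≤ 1) (hp : p ∈ ball x δ)
    (hq : dist q x ≤ c * dist p x ^ (1 + μ)) : q ∈ ball x δ :=
  calc dist q x ≤ c * dist p x ^ (1 + μ) := hq
    _ ≤ dist p x := mul_rpow_one_add_le_self dist_nonneg (mem_ball.mp hp).le hμ hc
    _ < δ := mem_ball.mp hp

theorem div_one_sub_mul_le_one {a b : ℝ} (ha : a < 1) (hab : a * (1 + b) ≤ 1) :
    a / (1 - a) * b ≤ 1 := by
  rw [div_mul_eq_mul_div, div_le_one (sub_pos.mpr ha)]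
  linarith

theorem newton_step_estimate_general {𝕜 E : Type*} [NontriviallyNormedField 𝕜]
    [SeminormedAddCommGroup E] [NormedSpace 𝕜 E] (f : E → E) (J : E → Set (E →L[𝕜] E))
    (xs : E) (hxs : f xs = 0) (δ lam ε μ : ℝ) (hμ : 0 ≤ μ) (hεlam : ε * lam < 1)
    (hyp : ∀ p ∈ ball xs δ, ∀ V ∈ J p,
      IsUnit V ∧ ‖Ring.inverse V‖ ≤ lam / (1 - ε * lam) ∧
      ‖f xs - f p - V (xs - p)‖ ≤ ε * ‖p - xs‖ ^ (1 + μ)) :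
    ∀ p ∈ ball xs δ, ∀ V ∈ J p,
      ‖p - Ring.inverse V (f p) - xs‖ ≤ ε * lam / (1 - ε * lam) * ‖p - xs‖ ^ (1 + μ) ∧
      (ε * lam * (1 + δ ^ μ) < 1 → p - Ring.inverse V (f p) ∈ ball xs δ) := by
  intro p hp V hV
  obtain ⟨hunit, hinv, hres⟩ := hyp p hp V hV
  have hstep : ‖p - Ring.inverse V (f p) - xs‖
      ≤ ε * lam / (1 - ε * lam) * ‖p - xs‖ ^ (1 + μ) :=
    calc ‖p - Ring.inverse V (f p) - xs‖
        ≤ ‖Ring.inverse V‖ * ‖f xs - f p - V (xs - p)‖ :=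
          norm_newton_step_sub_le hxs (leftInverse_ringInverse hunit) p
      _ ≤ lam / (1 - ε * lam) * (ε * ‖p - xs‖ ^ (1 + μ)) :=
          mul_le_mul hinv hres (norm_nonneg _) ((norm_nonneg _).trans hinv)
      _ = ε * lam / (1 - ε * lam) * ‖p - xs‖ ^ (1 + μ) := by ring
  refine ⟨hstep, fun hsmall => ?_⟩
  rw [← dist_eq_norm, ← dist_eq_norm] at hstep
  exact mem_ball_of_dist_le_mul_rpow hμ (div_one_sub_mul_le_one hεlam hsmall.le) hp hstep

/-- Local estimate for the Newton step (Euclidean case of Lemma 4.1): under regularity and a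
`(1+μ)`-order linearization bound on a ball around a zero `x*`, the Newton update
`p - V⁻¹ f(p)` satisfies `‖p - V⁻¹f(p) - x*‖ ≤ (ελ/(1-ελ))‖p - x*‖^{1+μ}`; moreover, if
`ελ(1 + δ^μ) < 1`, then the Newton iteration map sends the ball into itself. -/
theorem newton_step_estimate {n : ℕ}
    (f : EuclideanSpace ℝ (Fin n) → EuclideanSpace ℝ (Fin n)) (hf : LocallyLipschitz f)
    (xs : EuclideanSpace ℝ (Fin n)) (hxs : f xs = 0)
    (δ lam ε μ : ℝ) (hδ : 0 < δ) (hlam : 0 < lam) (hε : 0 < ε)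
    (hμ : μ ∈ Set.Icc (0 : ℝ) 1) (hεlam : ε * lam < 1)
    (hyp : ∀ p ∈ ball xs δ, ∀ V ∈ clarkeJacobian f p,
      IsUnit V ∧ ‖Ring.inverse V‖ ≤ lam / (1 - ε * lam) ∧
      ‖f xs - f p - V (xs - p)‖ ≤ ε * ‖p - xs‖ ^ (1 + μ)) :
    ∀ p ∈ ball xs δ, ∀ V ∈ clarkeJacobian f p,
      ‖p - Ring.inverse V (f p) - xs‖ ≤ ε * lam / (1 - ε * lam) * ‖p - xs‖ ^ (1 + μ) ∧
      (ε * lam * (1 + δ ^ μ) < 1 → p - Ring.inverse V (f p) ∈ ball xs δ) :=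
  newton_step_estimate_general f (clarkeJacobian f) xs hxs δ lam ε μ hμ.1 hεlam hyp
end
end

section
/- Let f : ℝⁿ → ℝⁿ be locally Lipschitz, let x* satisfy f(x*) = 0, and let δ > 0, λ > 0, ε > 0 and μ ∈ [0, 1] with ελ(1 + δ^μ) < 1 be such that for all p ∈ B_δ(x*) and all V ∈ ∂f(p): V is invertible, ‖V⁻¹‖ ≤ λ/(1 − ελ), and ‖f(x*) − f(p) − V(x* − p)‖ ≤ ε‖p − x*‖^{1+μ}. Then for every x₀ ∈ B_δ(x*) \ {x*}, every sequence {x_k} with x_{k+1} = x_k − V_k⁻¹ f(x_k) for some V_k ∈ ∂f(x_k) is well-defined, remains in B_δ(x*), converges to x*, and satisfies ‖x_{k+1} − x*‖ ≤ (ελ/(1 − ελ)) · ‖x_k − x*‖^{1+μ} for all k ≥ 0. -/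
open Metric Filter Topology

noncomputable section

/-!
Since `f xs = 0`, applying `V⁻¹` to the linearization residual `f xs - f p - V (xs - p)` yields
exactly the error `p - V⁻¹ (f p) - xs` of the Newton step. A step from distance `t < δ` therefore
lands at distance at most `ε * κ * t ^ (1 + μ) ≤ (ε * κ * δ ^ μ) * t`, where `‖V⁻¹‖ ≤ κ`, and
`ε * κ * δ ^ μ < 1` turns this into a linear contraction towards `xs`. For `κ = lam / (1 - ε * lam)`
this smallness condition is `ε * lam * (1 + δ ^ μ) < 1`.
-/

section Contraction

variable {X : Type*} [PseudoMetricSpace X] {x : ℕ → X} {a : X}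

lemma mem_ball_of_dist_succ_le_mul {δ q : ℝ} (hq : q ≤ 1) (h₀ : x 0 ∈ ball a δ)
    (hstep : ∀ k, x k ∈ ball a δ → dist (x (k + 1)) a ≤ q * dist (x k) a) (k : ℕ) :
    x k ∈ ball a δ := by
  induction k with
  | zero => exact h₀
  | succ k ih =>
    calc dist (x (k + 1)) a ≤ q * dist (x k) a := hstep k ih
      _ ≤ dist (x k) a := mul_le_of_le_one_left dist_nonneg hq
      _ < δ := ih

lemma tendsto_of_dist_succ_le_mul {q : ℝ} (hq₀ : 0 ≤ q) (hq₁ : q < 1)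
    (hstep : ∀ k, dist (x (k + 1)) a ≤ q * dist (x k) a) : Tendsto x atTop (𝓝 a) := by
  have hgeom : ∀ k, dist (x k) a ≤ q ^ k * dist (x 0) a :=
    fun k => le_geom (u := fun j => dist (x j) a) hq₀ k fun j _ => hstep j
  have hlim : Tendsto (fun k => q ^ k * dist (x 0) a) atTop (𝓝 0) := by
    simpa only [zero_mul] using
      (tendsto_pow_atTop_nhds_zero_of_lt_one hq₀ hq₁).mul_const (dist (x 0) a)
  exact tendsto_iff_dist_tendsto_zero.2 (squeeze_zero (fun _ => dist_nonneg) hgeom hlim)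

lemma mul_rpow_one_add_le_mul {c δ μ t : ℝ} (hc : 0 ≤ c) (hμ : 0 ≤ μ) (ht : 0 ≤ t) (htδ : t ≤ δ) :
    c * t ^ (1 + μ) ≤ c * δ ^ μ * t :=
  calc c * t ^ (1 + μ) = c * t ^ μ * t := by
        rw [Real.rpow_add_of_nonneg ht zero_le_one hμ, Real.rpow_one]; ring
    _ ≤ c * δ ^ μ * t := by gcongr

lemma mem_ball_and_tendsto_of_dist_succ_le_rpow {c δ μ : ℝ} (hc : 0 ≤ c) (hμ : 0 ≤ μ)
    (hcδ : c * δ ^ μ < 1) (h₀ : x 0 ∈ ball a δ)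
    (hstep : ∀ k, x k ∈ ball a δ → dist (x (k + 1)) a ≤ c * dist (x k) a ^ (1 + μ)) :
    (∀ k, x k ∈ ball a δ) ∧ Tendsto x atTop (𝓝 a) := by
  have hδ : 0 ≤ δ := (pos_of_mem_ball h₀).le
  have hlin : ∀ k, x k ∈ ball a δ → dist (x (k + 1)) a ≤ c * δ ^ μ * dist (x k) a :=
    fun k hk => (hstep k hk).trans (mul_rpow_one_add_le_mul hc hμ dist_nonneg (mem_ball.1 hk).le)
  have hmem : ∀ k, x k ∈ ball a δ := mem_ball_of_dist_succ_le_mul hcδ.le h₀ hlin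
  exact ⟨hmem, tendsto_of_dist_succ_le_mul (by positivity) hcδ fun k => hlin k (hmem k)⟩

end Contraction

section NewtonStep

variable {𝕜 E F : Type*} [NontriviallyNormedField 𝕜]
  [SeminormedAddCommGroup E] [NormedSpace 𝕜 E] [SeminormedAddCommGroup F] [NormedSpace 𝕜 F]
  {f : E → F} {xs p : E} {V : E →L[𝕜] F}

lemma newton_step_sub_eq_s9 (hxs : f xs = 0) (hV : V.IsInvertible) :
    p - V.inverse (f p) - xs = V.inverse (f xs - f p - V (xs - p)) := by
  rw [map_sub, hV.inverse_apply_self, hxs, zero_sub, map_neg]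
  abel

lemma norm_newton_step_sub_le_s9 {κ r : ℝ} (hxs : f xs = 0) (hV : V.IsInvertible)
    (hκ : ‖V.inverse‖ ≤ κ) (hr : ‖f xs - f p - V (xs - p)‖ ≤ r) :
    ‖p - V.inverse (f p) - xs‖ ≤ κ * r := by
  rw [newton_step_sub_eq_s9 hxs hV]
  exact V.inverse.le_of_opNorm_le_of_le hκ hr

/-- `J p` plays the role of the Clarke generalized Jacobian of `f` at `p`. -/
theorem newton_local_convergence_general (hxs : f xs = 0) {J : E → Set (E →L[𝕜] F)}
    {δ κ ε μ : ℝ} (hε : 0 ≤ ε) (hμ : 0 ≤ μ) (hsmall : ε * κ * δ ^ μ < 1)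
    (hJ : ∀ p ∈ ball xs δ, ∀ V ∈ J p, V.IsInvertible ∧ ‖V.inverse‖ ≤ κ ∧
      ‖f xs - f p - V (xs - p)‖ ≤ ε * ‖p - xs‖ ^ (1 + μ))
    {x : ℕ → E} {V : ℕ → E →L[𝕜] F} (hx₀ : x 0 ∈ ball xs δ) (hV : ∀ k, V k ∈ J (x k))
    (hx : ∀ k, x (k + 1) = x k - (V k).inverse (f (x k))) :
    (∀ k, (V k).IsInvertible) ∧ (∀ k, x k ∈ ball xs δ) ∧ Tendsto x atTop (𝓝 xs) ∧
      ∀ k, ‖x (k + 1) - xs‖ ≤ ε * κ * ‖x k - xs‖ ^ (1 + μ) := by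
  have hκ : 0 ≤ κ := (norm_nonneg _).trans (hJ (x 0) hx₀ (V 0) (hV 0)).2.1
  have hstep : ∀ k, x k ∈ ball xs δ →
      ‖x (k + 1) - xs‖ ≤ ε * κ * ‖x k - xs‖ ^ (1 + μ) := by
    intro k hk
    obtain ⟨hinv, hbound, hres⟩ := hJ (x k) hk (V k) (hV k)
    calc ‖x (k + 1) - xs‖ = ‖x k - (V k).inverse (f (x k)) - xs‖ := by rw [hx k]
      _ ≤ κ * (ε * ‖x k - xs‖ ^ (1 + μ)) := norm_newton_step_sub_le_s9 hxs hinv hbound hres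
      _ = ε * κ * ‖x k - xs‖ ^ (1 + μ) := by ring
  obtain ⟨hmem, hlim⟩ := mem_ball_and_tendsto_of_dist_succ_le_rpow (mul_nonneg hε hκ) hμ hsmall hx₀
    (by simpa only [dist_eq_norm] using hstep)
  exact ⟨fun k => (hJ (x k) (hmem k) (V k) (hV k)).1, hmem, hlim, fun k => hstep k (hmem k)⟩

end NewtonStep

lemma isUnit_iff_isInvertible {R M : Type*} [Semiring R] [TopologicalSpace M] [AddCommMonoid M]
    [Module R M] {V : M →L[R] M} : IsUnit V ↔ V.IsInvertible := by
  constructor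
  · rintro ⟨u, rfl⟩
    exact ⟨ContinuousLinearEquiv.ofUnit u, rfl⟩
  · rintro ⟨e, rfl⟩
    exact ⟨e.toUnit, rfl⟩

lemma div_one_sub_mul_lt_one {b d : ℝ} (hb : 0 ≤ b) (hd : 0 ≤ d) (h : b * (1 + d) < 1) :
    b / (1 - b) * d < 1 := by
  have hb1 : 0 < 1 - b := by linarith [mul_nonneg hb hd]
  rw [div_mul_eq_mul_div, div_lt_one hb1]
  linarith

/-- Local convergence of the semismooth Newton method with order `1 + μ` (Euclidean case of
Theorem 4.2): every Newton sequence starting in a suitable ball around the zero `x*` is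
well-defined, stays in the ball and converges to `x*` with order `1 + μ`. -/
theorem newton_local_convergence {n : ℕ}
    (f : EuclideanSpace ℝ (Fin n) → EuclideanSpace ℝ (Fin n)) (hf : LocallyLipschitz f)
    (xs : EuclideanSpace ℝ (Fin n)) (hxs : f xs = 0)
    (δ lam ε μ : ℝ) (hδ : 0 < δ) (hlam : 0 < lam) (hε : 0 < ε)
    (hμ : μ ∈ Set.Icc (0 : ℝ) 1) (hεlam : ε * lam * (1 + δ ^ μ) < 1)
    (hyp : ∀ p ∈ ball xs δ, ∀ V ∈ clarkeJacobian f p,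
      IsUnit V ∧ ‖Ring.inverse V‖ ≤ lam / (1 - ε * lam) ∧
      ‖f xs - f p - V (xs - p)‖ ≤ ε * ‖p - xs‖ ^ (1 + μ)) :
    ∀ x₀ ∈ ball xs δ, x₀ ≠ xs →
      ∀ (x : ℕ → EuclideanSpace ℝ (Fin n))
        (V : ℕ → (EuclideanSpace ℝ (Fin n) →L[ℝ] EuclideanSpace ℝ (Fin n))),
        x 0 = x₀ → (∀ k, V k ∈ clarkeJacobian f (x k)) →
        (∀ k, x (k + 1) = x k - Ring.inverse (V k) (f (x k))) →
        (∀ k, IsUnit (V k)) ∧ (∀ k, x k ∈ ball xs δ) ∧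
        Tendsto x atTop (𝓝 xs) ∧
        ∀ k, ‖x (k + 1) - xs‖ ≤ ε * lam / (1 - ε * lam) * ‖x k - xs‖ ^ (1 + μ) := by
  have hsmall := div_one_sub_mul_lt_one (mul_pos hε hlam).le (Real.rpow_nonneg hδ.le μ) hεlam
  rintro _ hx₀ - x V rfl
  simp only [ContinuousLinearMap.ringInverse_eq_inverse, isUnit_iff_isInvertible,
    mul_div_assoc] at hyp hsmall ⊢
  exact newton_local_convergence_general hxs hε.le hμ.1 hsmall hyp hx₀
end
end

section
/- Let f : ℝⁿ → ℝⁿ be locally Lipschitz, let x* satisfy f(x*) = 0, let 0 < μ ≤ 1, and assume f is μ-order semismooth and regular at x*. Then there exist δ > 0 and C > 0 such that for every x₀ ∈ B_δ(x*) \ {x*}, every sequence {x_k} with x_{k+1} = x_k − V_k⁻¹ f(x_k) for some V_k ∈ ∂f(x_k) is well-defined, remains in B_δ(x*), converges to x*, and satisfies ‖x_{k+1} − x*‖ ≤ C ‖x_k − x*‖^{1+μ} for all k ≥ 0. -/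
open Metric Filter Topology

noncomputable section

/-! The generalized Jacobian is the convex hull of the cluster set of `Df`, and cluster sets of a
locally relatively compact map depend upper hemicontinuously on the base point. Since the
invertible operators form an open set on which inversion is continuous, compactness of the
generalized Jacobian at `x*` yields a uniform bound on `V⁻¹` for all generalized Jacobians `V` at
points near `x*`. As `f x* = 0`, the Newton error is
`x - V⁻¹ (f x) - x* = V⁻¹ (f x* - f x - V (x* - x))`, so it is of order `‖x - x*‖ ^ (1 + μ)`; close
to `x*` this is at most `‖x - x*‖ / 2`, which keeps the iterates in the ball. -/

section ClusterSet

variable {X Y : Type*} [TopologicalSpace Y] {K : Set Y} {g : X → Y}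

lemma mem_closure_of_mapClusterPt {l : Filter X} {y : Y} (hy : MapClusterPt y l g)
    (hg : ∀ᶠ a in l, g a ∈ K) : y ∈ closure K :=
  mem_closure_iff_clusterPt.2 (ClusterPt.mono hy (le_principal_iff.2 hg))

lemma isCompact_setOfPred_mapClusterPt [T2Space Y] {l : Filter X} (hK : IsCompact K)
    (hg : ∀ᶠ a in l, g a ∈ K) : IsCompact {y | MapClusterPt y l g} :=
  hK.of_isClosed_subset isClosed_setOfPred_clusterPt fun _ hy ↦
    hK.isClosed.closure_eq ▸ mem_closure_of_mapClusterPt hy hg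

lemma upperHemicontinuousAt_setOfPred_mapClusterPt [TopologicalSpace X] [T3Space Y]
    {s : Set X} {a : X} (hK : IsCompact K) (hg : ∀ᶠ u in 𝓝[s] a, g u ∈ K) :
    UpperHemicontinuousAt (fun b ↦ {y | MapClusterPt y (𝓝[s] b) g}) a := by
  refine .of_forall_isOpen fun U hU hCU ↦ ?_
  obtain ⟨W, hW, hCW, hWU⟩ :=
    (isCompact_setOfPred_mapClusterPt hK hg).exists_isOpen_closure_subset (hU.mem_nhdsSet.2 hCU)
  have hgW : ∀ᶠ u in 𝓝[s] a, g u ∈ W :=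
    hK.tendsto_nhdsSet_of_mapClusterPt hg (fun _ _ hy ↦ hy) (hW.mem_nhdsSet.2 hCW)
  filter_upwards [eventually_nhds_nhdsWithin.2 hgW] with b hb y hy
  exact hWU (mem_closure_of_mapClusterPt hy hb)

end ClusterSet

section ConvexHull

lemma convexHull_eq_biUnion_image_stdSimplex {𝕜 E : Type*} [Field 𝕜] [LinearOrder 𝕜]
    [IsStrictOrderedRing 𝕜] [AddCommGroup E] [Module 𝕜 E] [FiniteDimensional 𝕜 E] (K : Set E) :
    convexHull 𝕜 K = ⋃ m ∈ Finset.range (Module.finrank 𝕜 E + 2),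
      (fun q : (Fin m → 𝕜) × (Fin m → E) ↦ ∑ i, q.1 i • q.2 i) ''
        (stdSimplex 𝕜 (Fin m) ×ˢ Set.univ.pi fun _ ↦ K) := by
  ext x
  simp only [Set.mem_iUnion, Finset.mem_range]
  constructor
  · intro hx
    obtain ⟨ι, _, z, w, hzK, hz, hw, hw1, rfl⟩ := eq_pos_convex_span_of_mem_convexHull hx
    have hcard : Fintype.card ι ≤ Module.finrank 𝕜 E + 1 :=
      hz.card_le_finrank_succ.trans (by gcongr; exact Submodule.finrank_le _)
    let e := (Fintype.equivFin ι).symm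
    exact ⟨Fintype.card ι, by lia, ⟨w ∘ e, z ∘ e⟩,
      ⟨⟨fun i ↦ (hw (e i)).le, (e.sum_comp w).trans hw1⟩, fun i _ ↦ hzK ⟨e i, rfl⟩⟩,
      e.sum_comp fun i ↦ w i • z i⟩
  · rintro ⟨m, -, ⟨w, z⟩, ⟨⟨hw, hw1⟩, hz⟩, rfl⟩
    exact (convex_convexHull 𝕜 K).sum_mem (fun i _ ↦ hw i) hw1
      fun i _ ↦ subset_convexHull 𝕜 K (hz i trivial)

lemma isCompact_convexHull_of_finiteDimensional {E : Type*} [AddCommGroup E] [Module ℝ E]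
    [TopologicalSpace E] [ContinuousAdd E] [ContinuousSMul ℝ E] [FiniteDimensional ℝ E]
    {K : Set E} (hK : IsCompact K) : IsCompact (convexHull ℝ K) := by
  rw [convexHull_eq_biUnion_image_stdSimplex]
  refine Finset.isCompact_biUnion _ fun m _ ↦ ?_
  exact ((isCompact_stdSimplex ℝ (Fin m)).prod (isCompact_univ_pi fun _ ↦ hK)).image (by fun_prop)

lemma upperHemicontinuousAt_convexHull {X E : Type*} [TopologicalSpace X]
    [SeminormedAddCommGroup E] [NormedSpace ℝ E] {J : X → Set E} {a : X}
    (hJ : UpperHemicontinuousAt J a) (hcomp : IsCompact (convexHull ℝ (J a))) :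
    UpperHemicontinuousAt (fun b ↦ convexHull ℝ (J b)) a := by
  refine .of_forall_isOpen fun U hU hJU ↦ ?_
  obtain ⟨η, hη, hηU⟩ := hcomp.exists_thickening_subset_open hU hJU
  have hJη : J a ⊆ thickening η (convexHull ℝ (J a)) :=
    (subset_convexHull ℝ (J a)).trans (self_subset_thickening hη _)
  filter_upwards [hJ.forall_isOpen _ isOpen_thickening hJη] with b hb
  exact (convexHull_min hb ((convex_convexHull ℝ (J a)).thickening η)).trans hηU

end ConvexHull

section LimitingJacobian

variable {E F : Type*} [NormedAddCommGroup E] [NormedSpace ℝ E] [NormedAddCommGroup F]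
  [NormedSpace ℝ F] {f : E → F} {p : E} {s : Set E} {K : NNReal}

/-- The limiting Jacobian, also called B-subdifferential, of `f` at `p`: the set of all limits of
Fréchet derivatives along sequences of differentiability points tending to `p`. Its convex hull is
the Clarke generalized Jacobian. -/
def limitingJacobian (f : E → F) (p : E) : Set (E →L[ℝ] F) :=
  {H | ∃ u : ℕ → E, (∀ k, DifferentiableAt ℝ f (u k)) ∧ Tendsto u atTop (𝓝 p) ∧
    Tendsto (fun k ↦ fderiv ℝ f (u k)) atTop (𝓝 H)}

lemma limitingJacobian_eq_setOfPred_mapClusterPt (f : E → F) (p : E) :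
    limitingJacobian f p =
      {H | MapClusterPt H (𝓝[{u | DifferentiableAt ℝ f u}] p) (fderiv ℝ f)} := by
  ext H
  constructor
  · rintro ⟨u, hdiff, hu, hH⟩
    exact hH.mapClusterPt.of_comp (tendsto_nhdsWithin_iff.2 ⟨hu, .of_forall hdiff⟩)
  · intro hH
    have hfreq : ∃ᶠ u in 𝓝 p ⊓ comap (fderiv ℝ f) (𝓝 H), DifferentiableAt ℝ f u := by
      rw [frequently_iff_neBot, inf_right_comm, ← map_neBot_iff (fderiv ℝ f),
        Filter.push_pull, inf_comm]
      exact hH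
    obtain ⟨u, hu, hdiff⟩ := exists_seq_forall_of_frequently hfreq
    obtain ⟨hup, huH⟩ := tendsto_inf.1 hu
    exact ⟨u, hdiff, hup, tendsto_comap_iff.1 huH⟩

lemma eventually_fderiv_mem_closedBall (hs : s ∈ 𝓝 p) (hf : LipschitzOnWith K f s) :
    ∀ᶠ u in 𝓝 p, fderiv ℝ f u ∈ closedBall 0 (K : ℝ) := by
  filter_upwards [eventually_mem_nhds_iff.2 hs] with u hu
  exact mem_closedBall_zero_iff.2 (norm_fderiv_le_of_lipschitzOn ℝ hu hf)

variable [FiniteDimensional ℝ E] [FiniteDimensional ℝ F]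

lemma isCompact_limitingJacobian (hs : s ∈ 𝓝 p) (hf : LipschitzOnWith K f s) :
    IsCompact (limitingJacobian f p) := by
  have := FiniteDimensional.proper ℝ (E →L[ℝ] F)
  rw [limitingJacobian_eq_setOfPred_mapClusterPt]
  exact isCompact_setOfPred_mapClusterPt (isCompact_closedBall 0 (K : ℝ))
    ((eventually_fderiv_mem_closedBall hs hf).filter_mono nhdsWithin_le_nhds)

lemma upperHemicontinuousAt_limitingJacobian (hs : s ∈ 𝓝 p) (hf : LipschitzOnWith K f s) :
    UpperHemicontinuousAt (limitingJacobian f) p := by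
  have := FiniteDimensional.proper ℝ (E →L[ℝ] F)
  rw [funext (limitingJacobian_eq_setOfPred_mapClusterPt f)]
  exact upperHemicontinuousAt_setOfPred_mapClusterPt (isCompact_closedBall 0 (K : ℝ))
    ((eventually_fderiv_mem_closedBall hs hf).filter_mono nhdsWithin_le_nhds)

end LimitingJacobian

section Newton

lemma mem_ball_and_tendsto_of_dist_succ_le {X : Type*} [PseudoMetricSpace X] {x : ℕ → X} {a : X}
    {δ c : ℝ} (hc0 : 0 ≤ c) (hc1 : c < 1) (hx0 : x 0 ∈ ball a δ)
    (hx : ∀ k, x k ∈ ball a δ → dist (x (k + 1)) a ≤ c * dist (x k) a) :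
    (∀ k, x k ∈ ball a δ) ∧ Tendsto x atTop (𝓝 a) := by
  have hball : ∀ k, x k ∈ ball a δ := by
    intro k
    induction k with
    | zero => exact hx0
    | succ k ih =>
      exact ((hx k ih).trans (mul_le_of_le_one_left dist_nonneg hc1.le)).trans_lt ih
  have hgeom : ∀ k, dist (x k) a ≤ c ^ k * dist (x 0) a := fun k ↦
    le_geom (u := fun j ↦ dist (x j) a) hc0 k fun j _ ↦ hx j (hball j)
  refine ⟨hball, tendsto_iff_dist_tendsto_zero.2 (squeeze_zero (fun _ ↦ dist_nonneg) hgeom ?_)⟩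
  simpa using (tendsto_pow_atTop_nhds_zero_of_lt_one hc0 hc1).mul_const (dist (x 0) a)

lemma eventually_mul_norm_sub_rpow_one_add_le {E : Type*} [SeminormedAddCommGroup E] {μ : ℝ}
    (hμ : 0 < μ) (C : ℝ) (a : E) :
    ∀ᶠ p in 𝓝 a, C * ‖p - a‖ ^ (1 + μ) ≤ 1 / 2 * ‖p - a‖ := by
  have hlim : Tendsto (fun p ↦ C * ‖p - a‖ ^ μ) (𝓝 a) (𝓝 0) := by
    have hcont : ContinuousAt (fun p ↦ C * ‖p - a‖ ^ μ) a := by fun_prop (disch := simp [hμ.le])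
    simpa [ContinuousAt, Real.zero_rpow hμ.ne'] using hcont
  filter_upwards [hlim.eventually_le_const one_half_pos] with p hp
  calc C * ‖p - a‖ ^ (1 + μ) = C * ‖p - a‖ ^ μ * ‖p - a‖ := by
        rw [Real.rpow_one_add' (norm_nonneg _) (by positivity)]; ring
    _ ≤ 1 / 2 * ‖p - a‖ := by gcongr

variable {𝕜 E F : Type*} [NontriviallyNormedField 𝕜] [NormedAddCommGroup E] [NormedSpace 𝕜 E]
  [NormedAddCommGroup F] [NormedSpace 𝕜 F]

lemma norm_newton_step_sub_le_s11 {f : E → F} {a p : E} {V : E →L[𝕜] F} (hV : V.IsInvertible)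
    (ha : f a = 0) :
    ‖p - V.inverse (f p) - a‖ ≤ ‖V.inverse‖ * ‖f a - f p - V (a - p)‖ := by
  have herror : p - V.inverse (f p) - a = V.inverse (f a - f p - V (a - p)) := by
    rw [map_sub, hV.inverse_apply_self, ha, zero_sub, map_neg]
    abel
  exact herror ▸ V.inverse.le_opNorm _

variable [CompleteSpace E]

lemma exists_eventually_nhdsSet_norm_inverse_le {K : Set (E →L[𝕜] F)} (hK : IsCompact K)
    (hinv : ∀ V ∈ K, V.IsInvertible) :
    ∃ M > 0, ∀ᶠ V in 𝓝ˢ K, V.IsInvertible ∧ ‖V.inverse‖ ≤ M := by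
  have hcont : ∀ V ∈ K, ContinuousAt ContinuousLinearMap.inverse V := fun V hV ↦
    ((hinv V hV).contDiffAt_map_inverse (n := 0)).continuousAt
  obtain ⟨M, hM⟩ := hK.exists_bound_of_continuousOn fun V hV ↦ (hcont V hV).continuousWithinAt
  refine ⟨max M 0 + 1, by positivity, eventually_nhdsSet_iff_forall.2 fun V hV ↦ ?_⟩
  have hlt : ‖V.inverse‖ < max M 0 + 1 := by linarith [hM V hV, le_max_left M 0]
  filter_upwards [ContinuousLinearEquiv.isOpen.mem_nhds (hinv V hV),
    (hcont V hV).norm.eventually_lt continuousAt_const hlt] with W hW hWM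
  exact ⟨hW, hWM.le⟩

variable {f : E → F} {J : E → Set (E →L[𝕜] F)} {a : E} {ε μ : ℝ}

lemma exists_eventually_norm_newton_step_sub_le (hJ : UpperHemicontinuousAt J a)
    (hcomp : IsCompact (J a)) (hinv : ∀ V ∈ J a, V.IsInvertible) (ha : f a = 0) (hε : 0 < ε)
    (hsemi : ∀ᶠ p in 𝓝 a, ∀ V ∈ J p, ‖f a - f p - V (a - p)‖ ≤ ε * ‖p - a‖ ^ (1 + μ)) :
    ∃ C > 0, ∀ᶠ p in 𝓝 a, ∀ V ∈ J p,
      V.IsInvertible ∧ ‖p - V.inverse (f p) - a‖ ≤ C * ‖p - a‖ ^ (1 + μ) := by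
  obtain ⟨M, hM, hbound⟩ := exists_eventually_nhdsSet_norm_inverse_le hcomp hinv
  refine ⟨M * ε, by positivity, ?_⟩
  filter_upwards [hJ _ hbound, hsemi] with p hp hsemip V hV
  obtain ⟨hVinv, hVM⟩ := subset_of_mem_nhdsSet hp hV
  refine ⟨hVinv, ?_⟩
  calc ‖p - V.inverse (f p) - a‖
      ≤ ‖V.inverse‖ * ‖f a - f p - V (a - p)‖ := norm_newton_step_sub_le_s11 hVinv ha
    _ ≤ M * (ε * ‖p - a‖ ^ (1 + μ)) := by gcongr; exact hsemip V hV
    _ = M * ε * ‖p - a‖ ^ (1 + μ) := (mul_assoc _ _ _).symm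

theorem newton_convergence_of_upperHemicontinuousAt (hJ : UpperHemicontinuousAt J a)
    (hcomp : IsCompact (J a)) (hinv : ∀ V ∈ J a, V.IsInvertible) (ha : f a = 0) (hμ : 0 < μ)
    (hε : 0 < ε)
    (hsemi : ∀ᶠ p in 𝓝 a, ∀ V ∈ J p, ‖f a - f p - V (a - p)‖ ≤ ε * ‖p - a‖ ^ (1 + μ)) :
    ∃ δ > 0, ∃ C > 0, ∀ (x : ℕ → E) (V : ℕ → E →L[𝕜] F), x 0 ∈ ball a δ → (∀ k, V k ∈ J (x k)) →
      (∀ k, x (k + 1) = x k - (V k).inverse (f (x k))) →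
      (∀ k, (V k).IsInvertible) ∧ (∀ k, x k ∈ ball a δ) ∧ Tendsto x atTop (𝓝 a) ∧
        ∀ k, ‖x (k + 1) - a‖ ≤ C * ‖x k - a‖ ^ (1 + μ) := by
  obtain ⟨C, hC, hstep⟩ :=
    exists_eventually_norm_newton_step_sub_le hJ hcomp hinv ha hε hsemi
  obtain ⟨δ, hδ, hball⟩ := eventually_nhds_iff_ball.1
    (hstep.and (eventually_mul_norm_sub_rpow_one_add_le hμ C a))
  refine ⟨δ, hδ, C, hC, fun x V hx0 hV hx ↦ ?_⟩
  have hnewton : ∀ k, x k ∈ ball a δ →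
      (V k).IsInvertible ∧ ‖x (k + 1) - a‖ ≤ C * ‖x k - a‖ ^ (1 + μ) := fun k hk ↦
    hx k ▸ (hball _ hk).1 (V k) (hV k)
  obtain ⟨hmem, hlim⟩ := mem_ball_and_tendsto_of_dist_succ_le (c := 1 / 2) (by norm_num)
    (by norm_num) hx0 fun k hk ↦ by
      simpa only [dist_eq_norm] using (hnewton k hk).2.trans (hball _ hk).2
  exact ⟨fun k ↦ (hnewton k (hmem k)).1, hmem, hlim, fun k ↦ (hnewton k (hmem k)).2⟩

end Newton

theorem newton_mu_order_convergence_general {E F : Type*} [NormedAddCommGroup E] [NormedSpace ℝ E]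
    [FiniteDimensional ℝ E] [NormedAddCommGroup F] [NormedSpace ℝ F] [FiniteDimensional ℝ F]
    {f : E → F} {a : E} {s : Set E} {K : NNReal} {ε μ : ℝ} (hs : s ∈ 𝓝 a)
    (hf : LipschitzOnWith K f s) (ha : f a = 0) (hμ : 0 < μ) (hε : 0 < ε)
    (hsemi : ∀ᶠ p in 𝓝 a, ∀ V ∈ convexHull ℝ (limitingJacobian f p),
      ‖f a - f p - V (a - p)‖ ≤ ε * ‖p - a‖ ^ (1 + μ))
    (hreg : ∀ V ∈ convexHull ℝ (limitingJacobian f a), V.IsInvertible) :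
    ∃ δ > 0, ∃ C > 0, ∀ (x : ℕ → E) (V : ℕ → E →L[ℝ] F), x 0 ∈ ball a δ →
      (∀ k, V k ∈ convexHull ℝ (limitingJacobian f (x k))) →
      (∀ k, x (k + 1) = x k - (V k).inverse (f (x k))) →
      (∀ k, (V k).IsInvertible) ∧ (∀ k, x k ∈ ball a δ) ∧ Tendsto x atTop (𝓝 a) ∧
        ∀ k, ‖x (k + 1) - a‖ ≤ C * ‖x k - a‖ ^ (1 + μ) := by
  have := FiniteDimensional.complete ℝ E
  have hcomp : IsCompact (convexHull ℝ (limitingJacobian f a)) :=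
    isCompact_convexHull_of_finiteDimensional (isCompact_limitingJacobian hs hf)
  have husc : UpperHemicontinuousAt (fun p ↦ convexHull ℝ (limitingJacobian f p)) a :=
    upperHemicontinuousAt_convexHull (upperHemicontinuousAt_limitingJacobian hs hf) hcomp
  exact newton_convergence_of_upperHemicontinuousAt husc hcomp hreg ha hμ hε hsemi

/-- Local convergence of order `1 + μ` of the Newton method for a `μ`-order semismooth map
that is regular at a zero `x*` (Euclidean case of the second part of Theorem 4.3). -/
theorem newton_mu_order_convergence {n : ℕ}
    (f : EuclideanSpace ℝ (Fin n) → EuclideanSpace ℝ (Fin n)) (hf : LocallyLipschitz f)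
    (xs : EuclideanSpace ℝ (Fin n)) (hxs : f xs = 0)
    (μ : ℝ) (hμ0 : 0 < μ) (hμ1 : μ ≤ 1)
    -- `f` is directionally differentiable near `x*`:
    (hdir : ∃ δ₀ > (0 : ℝ), ∀ p ∈ ball xs δ₀, ∀ v : EuclideanSpace ℝ (Fin n),
      ∃ d : EuclideanSpace ℝ (Fin n),
        Tendsto (fun t : ℝ => t⁻¹ • (f (p + t • v) - f p)) (𝓝[>] (0 : ℝ)) (𝓝 d))
    -- `μ`-order semismoothness estimate at `x*`:
    (hss : ∃ ε > (0 : ℝ), ∃ δ > (0 : ℝ), ∀ p ∈ ball xs δ, ∀ V ∈ clarkeJacobian f p,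
      ‖f xs - f p - V (xs - p)‖ ≤ ε * ‖p - xs‖ ^ (1 + μ))
    -- regularity at `x*`:
    (hreg : ∀ V ∈ clarkeJacobian f xs, IsUnit V) :
    ∃ δ > (0 : ℝ), ∃ C > (0 : ℝ), ∀ x₀ ∈ ball xs δ, x₀ ≠ xs →
      ∀ (x : ℕ → EuclideanSpace ℝ (Fin n))
        (V : ℕ → (EuclideanSpace ℝ (Fin n) →L[ℝ] EuclideanSpace ℝ (Fin n))),
        x 0 = x₀ → (∀ k, V k ∈ clarkeJacobian f (x k)) →
        (∀ k, x (k + 1) = x k - Ring.inverse (V k) (f (x k))) →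
        (∀ k, IsUnit (V k)) ∧ (∀ k, x k ∈ ball xs δ) ∧
        Tendsto x atTop (𝓝 xs) ∧
        ∀ k, ‖x (k + 1) - xs‖ ≤ C * ‖x k - xs‖ ^ (1 + μ) := by
  obtain ⟨K, s, hs, hK⟩ := hf xs
  obtain ⟨ε, hε, hss⟩ := hss
  simp only [isUnit_iff_isInvertible, ContinuousLinearMap.ringInverse_eq_inverse] at hreg ⊢
  obtain ⟨δ, hδ, C, hC, h⟩ := newton_mu_order_convergence_general hs hK hxs hμ0 hε
    (eventually_nhds_iff_ball.2 hss) hreg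
  exact ⟨δ, hδ, C, hC, fun x₀ hx₀ _ x V hx ↦ h x V (hx ▸ hx₀)⟩
end
end

section
/- Let f : ℝⁿ → ℝⁿ be locally Lipschitz and x₀ ∈ ℝⁿ. Suppose there exist constants λ > 0, ε > 0 and radii 0 < δ̄ < δ with ελ < 1/2 and (λ/(1 − 2ελ))·‖f(x₀)‖ ≤ δ̄, such that for all p, q ∈ B_δ(x₀) and all V ∈ ∂f(p): V is invertible, ‖V⁻¹‖ ≤ λ/(1 − ελ), and ‖f(q) − f(p) − V(q − p)‖ ≤ ε‖q − p‖. Then every sequence {x_k} with x_{k+1} = x_k − V_k⁻¹ f(x_k) for some V_k ∈ ∂f(x_k) is well-defined, remains in the open ball B_δ̄(x₀), and converges to a point x* in the closed ball B̄_δ̄(x₀) with f(x*) = 0. -/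
open Metric Filter Topology

noncomputable section

/-!
The Newton step from `p` solves `f p + V (q - p) = 0`, so the residual `f q` is exactly the error
of the affine model at `p`, hence at most `ε ‖q - p‖`; the next step is therefore at most
`r = ε M` times as long as the previous one, where `M = λ / (1 - ε λ)` bounds the inverses. Since
`M = (1 - r) λ / (1 - 2 ε λ)`, the condition on `f x₀` says that the first step is at most
`(1 - r) δ̄`, and the geometric series keeps the iterates in the ball of radius `δ̄` and makes them
converge.

If `a` is the limit, then `f (x j) → 0`. Comparing both `f a` and `f (x j)`, as `j → ∞`, with the
affine model at a fixed `x k` gives `‖f a‖ ≤ 2 ε ‖a - x k‖`, and `k → ∞` yields `f a = 0`.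
-/

theorem div_one_sub_mul_eq {K : Type*} [Field K] {ε lam : K} (h₁ : 1 - ε * lam ≠ 0)
    (h₂ : 1 - 2 * ε * lam ≠ 0) :
    lam / (1 - ε * lam) = (1 - ε * (lam / (1 - ε * lam))) * (lam / (1 - 2 * ε * lam)) := by
  have one_sub_eq : 1 - ε * (lam / (1 - ε * lam)) = (1 - 2 * ε * lam) / (1 - ε * lam) := by
    rw [eq_div_iff h₁, sub_mul, mul_assoc, div_mul_cancel₀ _ h₁]
    ring
  rw [one_sub_eq, div_mul_div_comm, mul_comm (1 - 2 * ε * lam), mul_div_mul_right _ _ h₂]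

theorem mem_ball_and_dist_succ_le_of_dist_succ_le_mul {α : Type*} [PseudoMetricSpace α]
    {x : ℕ → α} {r R : ℝ} (hr : 0 < r) (hR : 0 < R) (hinit : dist (x 0) (x 1) ≤ (1 - r) * R)
    (hcontr : ∀ k, x k ∈ ball (x 0) R → x (k + 1) ∈ ball (x 0) R →
      dist (x (k + 1)) (x (k + 2)) ≤ r * dist (x k) (x (k + 1))) (k : ℕ) :
    x k ∈ ball (x 0) R ∧ dist (x k) (x (k + 1)) ≤ (1 - r) * R * r ^ k := by
  have mem_ball_of_dist_le {k : ℕ} (h : dist (x k) (x 0) ≤ (1 - r ^ k) * R) :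
      x k ∈ ball (x 0) R :=
    h.trans_lt (mul_lt_of_lt_one_left hR (sub_lt_self 1 (pow_pos hr k)))
  suffices h : dist (x k) (x 0) ≤ (1 - r ^ k) * R ∧
      dist (x k) (x (k + 1)) ≤ (1 - r) * R * r ^ k from ⟨mem_ball_of_dist_le h.1, h.2⟩
  induction k with
  | zero => simpa using hinit
  | succ k ih =>
    obtain ⟨hdist, hstep⟩ := ih
    have hdist' : dist (x (k + 1)) (x 0) ≤ (1 - r ^ (k + 1)) * R :=
      calc dist (x (k + 1)) (x 0) ≤ dist (x k) (x (k + 1)) + dist (x k) (x 0) :=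
            dist_triangle_left _ _ _
        _ ≤ (1 - r) * R * r ^ k + (1 - r ^ k) * R := by gcongr
        _ = (1 - r ^ (k + 1)) * R := by ring
    refine ⟨hdist', ?_⟩
    calc dist (x (k + 1)) (x (k + 2)) ≤ r * dist (x k) (x (k + 1)) :=
          hcontr k (mem_ball_of_dist_le hdist) (mem_ball_of_dist_le hdist')
      _ ≤ r * ((1 - r) * R * r ^ k) := by gcongr
      _ = (1 - r) * R * r ^ (k + 1) := by ring

variable {𝕜 X Y : Type*} [NontriviallyNormedField 𝕜] [NormedAddCommGroup X] [NormedSpace 𝕜 X]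
  [NormedAddCommGroup Y] [NormedSpace 𝕜 Y]

/-- `V` approximates `f` on `s`, as seen from the single base point `p`, with slope error `ε`.
Unlike in `ApproximatesLinearOn`, the base point is fixed, so `V` may vary with it. -/
def ApproximatesLinearFrom (f : X → Y) (V : X →L[𝕜] Y) (s : Set X) (p : X) (ε : ℝ) : Prop :=
  ∀ q ∈ s, ‖f q - f p - V (q - p)‖ ≤ ε * ‖q - p‖

/-- The Newton iterate of `p` for the equation `f = 0`, computed with `V` in place of the
derivative of `f` at `p`. It equals `p` when `V` is not invertible, as `V.inverse` is then `0`. -/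
def newtonStep (f : X → Y) (V : X →L[𝕜] Y) (p : X) : X :=
  p - V.inverse (f p)

theorem dist_newtonStep_le (f : X → Y) (V : X →L[𝕜] Y) (p : X) :
    dist p (newtonStep f V p) ≤ ‖V.inverse‖ * ‖f p‖ := by
  rw [dist_eq_norm, newtonStep, sub_sub_cancel]
  exact V.inverse.le_opNorm _

theorem map_newtonStep_sub (f : X → Y) {V : X →L[𝕜] Y} (hV : V.IsInvertible) (p : X) :
    V (newtonStep f V p - p) = -f p := by
  rw [newtonStep, sub_sub_cancel_left, map_neg, hV.self_apply_inverse]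

theorem ApproximatesLinearFrom.norm_newtonStep_le {f : X → Y} {V : X →L[𝕜] Y} {s : Set X} {p : X}
    {ε : ℝ} (h : ApproximatesLinearFrom f V s p ε) (hV : V.IsInvertible)
    (hs : newtonStep f V p ∈ s) :
    ‖f (newtonStep f V p)‖ ≤ ε * dist p (newtonStep f V p) := by
  simpa [map_newtonStep_sub f hV, dist_eq_norm'] using h _ hs

theorem eq_of_tendsto_of_approximatesLinearFrom {f : X → Y} {x : ℕ → X} {V : ℕ → X →L[𝕜] Y}
    {s : Set X} {a : X} {b : Y} {ε : ℝ} (hV : ∀ k, ApproximatesLinearFrom f (V k) s (x k) ε)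
    (hxs : ∀ k, x k ∈ s) (has : a ∈ s) (hxa : Tendsto x atTop (𝓝 a))
    (hfx : Tendsto (fun k ↦ f (x k)) atTop (𝓝 b)) : f a = b := by
  have approx_limit (k : ℕ) : ‖b - f (x k) - V k (a - x k)‖ ≤ ε * ‖a - x k‖ := by
    have hsub : Tendsto (fun j ↦ x j - x k) atTop (𝓝 (a - x k)) := hxa.sub_const _
    exact le_of_tendsto_of_tendsto'
      ((hfx.sub_const _).sub (((V k).continuous.tendsto _).comp hsub)).norm
      (hsub.norm.const_mul ε) fun j ↦ hV k _ (hxs j)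
  have dist_le (k : ℕ) : dist (f a) b ≤ 2 * ε * dist (x k) a :=
    calc dist (f a) b
        = ‖(f a - f (x k) - V k (a - x k)) - (b - f (x k) - V k (a - x k))‖ := by
          rw [dist_eq_norm, sub_sub_sub_cancel_right, sub_sub_sub_cancel_right]
      _ ≤ ε * ‖a - x k‖ + ε * ‖a - x k‖ := norm_sub_le_of_le (hV k a has) (approx_limit k)
      _ = 2 * ε * dist (x k) a := by rw [dist_eq_norm']; ring
  have bound_tendsto : Tendsto (fun k ↦ 2 * ε * dist (x k) a) atTop (𝓝 0) := by
    simpa using (tendsto_iff_dist_tendsto_zero.1 hxa).const_mul (2 * ε)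
  exact dist_le_zero.1 (ge_of_tendsto' bound_tendsto dist_le)

theorem isUnit_iff_isInvertible_s12 {V : X →L[𝕜] X} : IsUnit V ↔ V.IsInvertible := by
  constructor
  · rintro ⟨u, rfl⟩
    exact ⟨ContinuousLinearEquiv.unitsEquiv 𝕜 X u, rfl⟩
  · rintro ⟨e, rfl⟩
    exact ((ContinuousLinearEquiv.unitsEquiv 𝕜 X).symm e).isUnit

theorem dist_newtonStep_newtonStep_le {f : X → Y} {V W : X →L[𝕜] Y} {s : Set X} {p : X}
    {ε M : ℝ} (h : ApproximatesLinearFrom f V s p ε) (hV : V.IsInvertible)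
    (hs : newtonStep f V p ∈ s) (hW : ‖W.inverse‖ ≤ M) :
    dist (newtonStep f V p) (newtonStep f W (newtonStep f V p)) ≤
      ε * M * dist p (newtonStep f V p) :=
  calc dist (newtonStep f V p) (newtonStep f W (newtonStep f V p))
      ≤ ‖W.inverse‖ * ‖f (newtonStep f V p)‖ := dist_newtonStep_le f W _
    _ ≤ M * (ε * dist p (newtonStep f V p)) :=
        mul_le_mul hW (h.norm_newtonStep_le hV hs) (norm_nonneg _) ((norm_nonneg _).trans hW)
    _ = ε * M * dist p (newtonStep f V p) := by ring

theorem newton_mem_ball_and_dist_succ_le {f : X → Y} {x : ℕ → X} {V : ℕ → X →L[𝕜] Y} {s : Set X}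
    {M ε R : ℝ} (hr : 0 < ε * M) (hR : 0 < R) (hRs : ball (x 0) R ⊆ s)
    (hinit : M * ‖f (x 0)‖ ≤ (1 - ε * M) * R)
    (hV : ∀ k, x k ∈ s →
      (V k).IsInvertible ∧ ‖(V k).inverse‖ ≤ M ∧ ApproximatesLinearFrom f (V k) s (x k) ε)
    (hx : ∀ k, x (k + 1) = newtonStep f (V k) (x k)) (k : ℕ) :
    x k ∈ ball (x 0) R ∧ dist (x k) (x (k + 1)) ≤ (1 - ε * M) * R * (ε * M) ^ k := by
  have first_step : dist (x 0) (x 1) ≤ (1 - ε * M) * R := by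
    obtain ⟨-, hM, -⟩ := hV 0 (hRs (mem_ball_self hR))
    calc dist (x 0) (x 1) ≤ ‖(V 0).inverse‖ * ‖f (x 0)‖ := hx 0 ▸ dist_newtonStep_le f _ _
      _ ≤ M * ‖f (x 0)‖ := by gcongr
      _ ≤ (1 - ε * M) * R := hinit
  refine mem_ball_and_dist_succ_le_of_dist_succ_le_mul hr hR first_step (fun k hk hk' ↦ ?_) k
  obtain ⟨hinv, -, happrox⟩ := hV k (hRs hk)
  obtain ⟨-, hM, -⟩ := hV (k + 1) (hRs hk')
  simpa only [← hx] using dist_newtonStep_newtonStep_le happrox hinv (hx k ▸ hRs hk') hM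

theorem eq_zero_of_tendsto_newtonStep {f : X → Y} {x : ℕ → X} {V : ℕ → X →L[𝕜] Y} {s : Set X}
    {a : X} {ε : ℝ} (hinv : ∀ k, (V k).IsInvertible)
    (happrox : ∀ k, ApproximatesLinearFrom f (V k) s (x k) ε)
    (hx : ∀ k, x (k + 1) = newtonStep f (V k) (x k)) (hxs : ∀ k, x k ∈ s) (has : a ∈ s)
    (hxa : Tendsto x atTop (𝓝 a)) : f a = 0 := by
  have residual_le (k : ℕ) : ‖f (x (k + 1))‖ ≤ ε * dist (x k) (x (k + 1)) := by
    simpa only [← hx] using (happrox k).norm_newtonStep_le (hinv k) (hx k ▸ hxs (k + 1))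
  have step_tendsto : Tendsto (fun k ↦ ε * dist (x k) (x (k + 1))) atTop (𝓝 0) := by
    simpa using (hxa.dist (hxa.comp (tendsto_add_atTop_nat 1))).const_mul ε
  have residual_tendsto : Tendsto (fun k ↦ f (x k)) atTop (𝓝 0) :=
    (tendsto_add_atTop_iff_nat 1).1 (squeeze_zero_norm residual_le step_tendsto)
  exact eq_of_tendsto_of_approximatesLinearFrom happrox hxs has hxa residual_tendsto

theorem newton_kantorovich_existence_general [CompleteSpace X] (f : X → Y)
    (J : X → Set (X →L[𝕜] Y)) (x₀ : X) (lam ε δbar δ : ℝ)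
    (hlam : 0 < lam) (hε : 0 < ε) (hδbar : 0 < δbar) (hδ : δbar < δ)
    (hεlam : ε * lam < 1 / 2)
    (hinit : lam / (1 - 2 * ε * lam) * ‖f x₀‖ ≤ δbar)
    (hyp : ∀ p ∈ ball x₀ δ, ∀ V ∈ J p,
      V.IsInvertible ∧ ‖V.inverse‖ ≤ lam / (1 - ε * lam) ∧
      ApproximatesLinearFrom f V (ball x₀ δ) p ε)
    (x : ℕ → X) (V : ℕ → X →L[𝕜] Y) (hx₀ : x 0 = x₀) (hV : ∀ k, V k ∈ J (x k))
    (hx : ∀ k, x (k + 1) = newtonStep f (V k) (x k)) :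
    (∀ k, (V k).IsInvertible) ∧ (∀ k, x k ∈ ball x₀ δbar) ∧
      ∃ xs ∈ closedBall x₀ δbar, f xs = 0 ∧ Tendsto x atTop (𝓝 xs) := by
  subst hx₀
  set M := lam / (1 - ε * lam) with hM
  have hden : 0 < 1 - ε * lam := by linarith
  have hden₂ : 0 < 1 - 2 * ε * lam := by linarith
  have hr : 0 < ε * M := by positivity
  have hr_lt : ε * M < 1 := by rw [hM, ← mul_div_assoc, div_lt_one hden]; linarith
  have hfirst : M * ‖f (x 0)‖ ≤ (1 - ε * M) * δbar :=
    calc M * ‖f (x 0)‖ = (1 - ε * M) * (lam / (1 - 2 * ε * lam) * ‖f (x 0)‖) := by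
          rw [← mul_assoc, ← div_one_sub_mul_eq hden.ne' hden₂.ne']
      _ ≤ (1 - ε * M) * δbar := mul_le_mul_of_nonneg_left hinit (sub_nonneg.2 hr_lt.le)
  have hball : ball (x 0) δbar ⊆ ball (x 0) δ := ball_subset_ball hδ.le
  have hiter := newton_mem_ball_and_dist_succ_le hr hδbar hball hfirst
    (fun k hk ↦ hyp _ hk _ (hV k)) hx
  have hxδ (k : ℕ) : x k ∈ ball (x 0) δ := hball (hiter k).1
  obtain ⟨xs, hxs⟩ := cauchySeq_tendsto_of_complete
    (cauchySeq_of_le_geometric _ _ hr_lt fun k ↦ (hiter k).2)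
  have hxs_mem : xs ∈ closedBall (x 0) δbar := isClosed_closedBall.mem_of_tendsto hxs
    (Eventually.of_forall fun k ↦ ball_subset_closedBall (hiter k).1)
  have hinv (k : ℕ) : (V k).IsInvertible := (hyp _ (hxδ k) _ (hV k)).1
  exact ⟨hinv, fun k ↦ (hiter k).1, xs, hxs_mem,
    eq_zero_of_tendsto_newtonStep hinv (fun k ↦ (hyp _ (hxδ k) _ (hV k)).2.2) hx hxδ
      (closedBall_subset_ball hδ hxs_mem) hxs, hxs⟩

/-- Kantorovich-type theorem for the Newton method (Euclidean case of Theorem 4.4, existence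
and convergence): every Newton sequence starting at `x₀` is well-defined, stays in the open
ball of radius `δ̄` around `x₀`, and converges to a zero of `f` in the closed ball. -/
theorem newton_kantorovich_existence {n : ℕ}
    (f : EuclideanSpace ℝ (Fin n) → EuclideanSpace ℝ (Fin n)) (hf : LocallyLipschitz f)
    (x₀ : EuclideanSpace ℝ (Fin n)) (lam ε δbar δ : ℝ)
    (hlam : 0 < lam) (hε : 0 < ε) (hδbar : 0 < δbar) (hδ : δbar < δ)
    (hεlam : ε * lam < 1 / 2)
    (hinit : lam / (1 - 2 * ε * lam) * ‖f x₀‖ ≤ δbar)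
    (hyp : ∀ p ∈ ball x₀ δ, ∀ V ∈ clarkeJacobian f p,
      IsUnit V ∧ ‖Ring.inverse V‖ ≤ lam / (1 - ε * lam) ∧
      ∀ q ∈ ball x₀ δ, ‖f q - f p - V (q - p)‖ ≤ ε * ‖q - p‖) :
    ∀ (x : ℕ → EuclideanSpace ℝ (Fin n))
      (V : ℕ → (EuclideanSpace ℝ (Fin n) →L[ℝ] EuclideanSpace ℝ (Fin n))),
      x 0 = x₀ → (∀ k, V k ∈ clarkeJacobian f (x k)) →
      (∀ k, x (k + 1) = x k - Ring.inverse (V k) (f (x k))) →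
      (∀ k, IsUnit (V k)) ∧ (∀ k, x k ∈ ball x₀ δbar) ∧
      ∃ xs ∈ closedBall x₀ δbar, f xs = 0 ∧ Tendsto x atTop (𝓝 xs) := by
  simp only [isUnit_iff_isInvertible_s12, ContinuousLinearMap.ringInverse_eq_inverse] at hyp ⊢
  exact newton_kantorovich_existence_general f _ x₀ lam ε δbar δ hlam hε hδbar hδ hεlam hinit hyp
end
end

section
/- Under the hypotheses of the Kantorovich-type theorem (f : ℝⁿ → ℝⁿ locally Lipschitz, x₀ ∈ ℝⁿ, constants λ > 0, ε > 0, 0 < δ̄ < δ with ελ < 1/2, (λ/(1 − 2ελ))·‖f(x₀)‖ ≤ δ̄, and for all p, q ∈ B_δ(x₀), V ∈ ∂f(p): V invertible, ‖V⁻¹‖ ≤ λ/(1 − ελ), ‖f(q) − f(p) − V(q − p)‖ ≤ ε‖q − p‖), the zero of f in the closed ball B̄_δ̄(x₀) is unique: if x*, q ∈ B̄_δ̄(x₀) satisfy f(x*) = 0 and f(q) = 0, then q = x*. -/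
open Metric Filter Topology

noncomputable section

/-!
The Jacobians of `f` near a point are defined almost everywhere by Rademacher's theorem and bounded
by the Lipschitz constant, so they accumulate, and there is a `V ∈ ∂f(p)` for every `p`. If
`f q = f p`, the linearization estimate bounds `‖V (q - p)‖` by `ε‖q - p‖`, hence
`‖q - p‖ ≤ ‖V⁻¹‖ ε ‖q - p‖`. The factor `‖V⁻¹‖ ε ≤ ελ / (1 - ελ)` is less than `1` because
`ελ < 1/2`; thus `f` is injective on the whole open ball.
-/

section Rademacher

variable {E F : Type*} [NormedAddCommGroup E] [NormedSpace ℝ E] [FiniteDimensional ℝ E]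
  [NormedAddCommGroup F] [NormedSpace ℝ F] [FiniteDimensional ℝ F]
  {f : E → F} {K : NNReal} {t : Set E} {p : E}

theorem frequently_differentiableAt_of_lipschitzOnWith (hf : LipschitzOnWith K f t)
    (ht : t ∈ 𝓝 p) : ∃ᶠ x in 𝓝 p, DifferentiableAt ℝ f x := by
  borelize E
  have hdense : Dense {x | x ∈ t → DifferentiableWithinAt ℝ f t x} :=
    MeasureTheory.Measure.dense_of_ae
      (hf.ae_differentiableWithinAt_of_mem (μ := MeasureTheory.Measure.addHaar))
  refine ((mem_closure_iff_frequently.1 (hdense p)).and_eventually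
    (eventually_mem_nhds_iff.2 ht)).mono ?_
  rintro x ⟨hx, htx⟩
  exact (hx (mem_of_mem_nhds htx)).differentiableAt htx

theorem exists_seq_tendsto_fderiv_of_lipschitzOnWith (hf : LipschitzOnWith K f t)
    (ht : t ∈ 𝓝 p) :
    ∃ (H : E →L[ℝ] F) (u : ℕ → E), (∀ k, DifferentiableAt ℝ f (u k)) ∧
      Tendsto u atTop (𝓝 p) ∧ Tendsto (fun k => fderiv ℝ f (u k)) atTop (𝓝 H) := by
  have hbound : ∀ᶠ x in 𝓝 p, ‖fderiv ℝ f x‖ ≤ K :=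
    (eventually_mem_nhds_iff.2 ht).mono fun _ htx => norm_fderiv_le_of_lipschitzOn ℝ htx hf
  obtain ⟨u, hup, hu⟩ := exists_seq_forall_of_frequently
    ((frequently_differentiableAt_of_lipschitzOnWith hf ht).and_eventually hbound)
  obtain ⟨H, -, φ, hφ, hH⟩ := tendsto_subseq_of_bounded
    (isBounded_closedBall (x := (0 : E →L[ℝ] F)) (r := K))
    fun k => mem_closedBall_zero_iff.2 (hu k).2
  exact ⟨H, u ∘ φ, fun k => (hu (φ k)).1, hup.comp hφ.tendsto_atTop, hH⟩

end Rademacher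

theorem clarkeJacobian_nonempty {n : ℕ}
    {f : EuclideanSpace ℝ (Fin n) → EuclideanSpace ℝ (Fin n)} {p : EuclideanSpace ℝ (Fin n)}
    {K : NNReal} {t : Set (EuclideanSpace ℝ (Fin n))} (hf : LipschitzOnWith K f t)
    (ht : t ∈ 𝓝 p) : (clarkeJacobian f p).Nonempty :=
  convexHull_nonempty_iff.2 (exists_seq_tendsto_fderiv_of_lipschitzOnWith hf ht)

theorem eq_of_map_eq_of_norm_sub_sub_le {𝕜 E F : Type*} [NontriviallyNormedField 𝕜]
    [NormedAddCommGroup E] [NormedSpace 𝕜 E] [NormedAddCommGroup F] [NormedSpace 𝕜 F]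
    {f : E → F} {V : E →L[𝕜] F} {W : F →L[𝕜] E} {ε : ℝ} {p q : E}
    (hWV : Function.LeftInverse W V) (hWε : ‖W‖ * ε < 1)
    (happrox : ‖f q - f p - V (q - p)‖ ≤ ε * ‖q - p‖) (hpq : f q = f p) : q = p := by
  rw [hpq, sub_self, zero_sub, norm_neg] at happrox
  by_contra hne
  have hpos : 0 < ‖q - p‖ := norm_sub_pos_iff.2 hne
  have hcontract : ‖q - p‖ < ‖q - p‖ :=
    calc ‖q - p‖ = ‖W (V (q - p))‖ := by rw [hWV]
      _ ≤ ‖W‖ * ‖V (q - p)‖ := W.le_opNorm _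
      _ ≤ ‖W‖ * (ε * ‖q - p‖) := by gcongr
      _ = ‖W‖ * ε * ‖q - p‖ := by ring
      _ < ‖q - p‖ := mul_lt_of_lt_one_left hpos hWε
  exact hcontract.false

theorem newton_kantorovich_uniqueness_general {n : ℕ}
    {f : EuclideanSpace ℝ (Fin n) → EuclideanSpace ℝ (Fin n)}
    {s : Set (EuclideanSpace ℝ (Fin n))} {ε : ℝ}
    (hf : ∀ p ∈ s, ∃ K, ∃ t ∈ 𝓝 p, LipschitzOnWith K f t)
    (hyp : ∀ p ∈ s, ∀ V ∈ clarkeJacobian f p,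
      IsUnit V ∧ ‖Ring.inverse V‖ * ε < 1 ∧
      ∀ q ∈ s, ‖f q - f p - V (q - p)‖ ≤ ε * ‖q - p‖) :
    Set.InjOn f s := by
  intro q hq p hp hqp
  obtain ⟨K, t, ht, hlip⟩ := hf p hp
  obtain ⟨V, hV⟩ := clarkeJacobian_nonempty hlip ht
  obtain ⟨hunit, hinv, happrox⟩ := hyp p hp V hV
  have hleft : Function.LeftInverse ⇑(Ring.inverse V) ⇑V :=
    DFunLike.congr_fun (Ring.inverse_mul_cancel V hunit)
  exact eq_of_map_eq_of_norm_sub_sub_le hleft hinv (happrox q hq) hqp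

theorem div_one_sub_mul_mul_lt_one {lam ε : ℝ} (h : ε * lam < 1 / 2) :
    lam / (1 - ε * lam) * ε < 1 := by
  rw [div_mul_eq_mul_div, div_lt_one (by linarith)]
  linarith

/-- Uniqueness assertion of the Kantorovich-type theorem (Euclidean case of Theorem 4.4):
the zero of `f` in the closed ball of radius `δ̄` around `x₀` is unique. -/
theorem newton_kantorovich_uniqueness {n : ℕ}
    (f : EuclideanSpace ℝ (Fin n) → EuclideanSpace ℝ (Fin n)) (hf : LocallyLipschitz f)
    (x₀ : EuclideanSpace ℝ (Fin n)) (lam ε δbar δ : ℝ)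
    (hlam : 0 < lam) (hε : 0 < ε) (hδbar : 0 < δbar) (hδ : δbar < δ)
    (hεlam : ε * lam < 1 / 2)
    (hinit : lam / (1 - 2 * ε * lam) * ‖f x₀‖ ≤ δbar)
    (hyp : ∀ p ∈ ball x₀ δ, ∀ V ∈ clarkeJacobian f p,
      IsUnit V ∧ ‖Ring.inverse V‖ ≤ lam / (1 - ε * lam) ∧
      ∀ q ∈ ball x₀ δ, ‖f q - f p - V (q - p)‖ ≤ ε * ‖q - p‖) :
    ∀ xs ∈ closedBall x₀ δbar, ∀ q ∈ closedBall x₀ δbar,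
      f xs = 0 → f q = 0 → q = xs := by
  have hinj : Set.InjOn f (ball x₀ δ) :=
    newton_kantorovich_uniqueness_general (fun p _ => hf p) fun p hp V hV => by
      obtain ⟨hunit, hinv, happrox⟩ := hyp p hp V hV
      have hcontract : ‖Ring.inverse V‖ * ε < 1 :=
        (mul_le_mul_of_nonneg_right hinv hε.le).trans_lt (div_one_sub_mul_mul_lt_one hεlam)
      exact ⟨hunit, hcontract, happrox⟩
  intro xs hxs q hq hfx hfq
  exact hinj (closedBall_subset_ball hδ hq) (closedBall_subset_ball hδ hxs) (hfq.trans hfx.symm)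
end
end

section
/- Under the hypotheses of the Kantorovich-type theorem (f : ℝⁿ → ℝⁿ locally Lipschitz, x₀ ∈ ℝⁿ, constants λ > 0, ε > 0, 0 < δ̄ < δ with ελ < 1/2, (λ/(1 − 2ελ))·‖f(x₀)‖ ≤ δ̄, and for all p, q ∈ B_δ(x₀), V ∈ ∂f(p): V invertible, ‖V⁻¹‖ ≤ λ/(1 − ελ), ‖f(q) − f(p) − V(q − p)‖ ≤ ε‖q − p‖), the Newton sequence x_{k+1} = x_k − V_k⁻¹ f(x_k), V_k ∈ ∂f(x_k), converges to the zero x* of f in B̄_δ̄(x₀) with the error estimate ‖x_k − x*‖ ≤ (ελ/(1 − 2ελ))·‖x_k − x_{k−1}‖ for all k ≥ 1. -/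
open Metric Filter Topology

noncomputable section

/-!
With `β = λ / (1 - ελ)` bounding the inverses, a Newton step from `p` to `q` satisfies
`‖q - p‖ ≤ β ‖f p‖`, while the accuracy of the linearization at `p` leaves only the residual
`‖f q‖ ≤ ε ‖q - p‖`. Consecutive steps therefore shrink by the factor `c = εβ < 1`, so the iterates
never leave the ball and converge geometrically; `c / (1 - c) = ελ / (1 - 2ελ)` is the constant of
the error estimate. That the limit is a zero is read off the linearizations rather than from
continuity: comparing two points through the linearization at one iterate bounds the jump of `f` at
the limit, and this bound vanishes as the iterate approaches the limit.
-/

section LocalContraction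

variable {X : Type*} [PseudoMetricSpace X] {x : ℕ → X} {c r : ℝ}

theorem mem_closedBall_of_dist_succ_le_mul (hc₀ : 0 ≤ c) (hc₁ : c < 1)
    (hinit : dist (x 0) (x 1) ≤ (1 - c) * r)
    (hstep : ∀ k, x k ∈ closedBall (x 0) r → x (k + 1) ∈ closedBall (x 0) r →
      dist (x (k + 1)) (x (k + 2)) ≤ c * dist (x k) (x (k + 1))) (k : ℕ) :
    x k ∈ closedBall (x 0) r := by
  -- The distance from `x 0` plus `1 / (1 - c)` times the next step is non-increasing.
  suffices h : (1 - c) * dist (x 0) (x k) + dist (x k) (x (k + 1)) ≤ (1 - c) * r by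
    rw [mem_closedBall']
    exact le_of_mul_le_mul_left ((le_add_of_nonneg_right dist_nonneg).trans h) (sub_pos.2 hc₁)
  induction k with
  | zero => simpa only [dist_self, mul_zero, zero_add] using hinit
  | succ k ih =>
    have hle : dist (x 0) (x k) + dist (x k) (x (k + 1)) ≤ r := by
      refine le_of_mul_le_mul_left ?_ (sub_pos.2 hc₁)
      nlinarith [mul_nonneg hc₀ (dist_nonneg (x := x k) (y := x (k + 1)))]
    have htri := dist_triangle (x 0) (x k) (x (k + 1))
    have hk : x k ∈ closedBall (x 0) r :=
      mem_closedBall'.2 ((le_add_of_nonneg_right dist_nonneg).trans hle)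
    have hk' : x (k + 1) ∈ closedBall (x 0) r := mem_closedBall'.2 (htri.trans hle)
    calc (1 - c) * dist (x 0) (x (k + 1)) + dist (x (k + 1)) (x (k + 2))
        ≤ (1 - c) * (dist (x 0) (x k) + dist (x k) (x (k + 1)))
            + c * dist (x k) (x (k + 1)) :=
          add_le_add (mul_le_mul_of_nonneg_left htri (sub_pos.2 hc₁).le) (hstep k hk hk')
      _ = (1 - c) * dist (x 0) (x k) + dist (x k) (x (k + 1)) := by ring
      _ ≤ (1 - c) * r := ih

theorem dist_succ_le_mul_pow_of_dist_succ_le_mul (hc₀ : 0 ≤ c)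
    (hstep : ∀ k, dist (x (k + 1)) (x (k + 2)) ≤ c * dist (x k) (x (k + 1))) (n : ℕ) :
    dist (x n) (x (n + 1)) ≤ dist (x 0) (x 1) * c ^ n := by
  rw [mul_comm]
  exact le_geom (u := fun k => dist (x k) (x (k + 1))) hc₀ n fun k _ => hstep k

theorem cauchySeq_of_dist_succ_le_mul (hc₀ : 0 ≤ c) (hc₁ : c < 1)
    (hstep : ∀ k, dist (x (k + 1)) (x (k + 2)) ≤ c * dist (x k) (x (k + 1))) :
    CauchySeq x :=
  cauchySeq_of_le_geometric c _ hc₁ (dist_succ_le_mul_pow_of_dist_succ_le_mul hc₀ hstep)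

theorem dist_succ_le_of_dist_succ_le_mul_of_tendsto (hc₀ : 0 ≤ c) (hc₁ : c < 1)
    (hstep : ∀ k, dist (x (k + 1)) (x (k + 2)) ≤ c * dist (x k) (x (k + 1)))
    {a : X} (ha : Tendsto x atTop (𝓝 a)) (k : ℕ) :
    dist (x (k + 1)) a ≤ c / (1 - c) * dist (x k) (x (k + 1)) := by
  have htail : Tendsto (fun j => x (j + (k + 1))) atTop (𝓝 a) := (tendsto_add_atTop_iff_nat _).2 ha
  have hgeom : ∀ j, dist (x (j + (k + 1))) (x (j + 1 + (k + 1))) ≤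
      dist (x (0 + (k + 1))) (x (1 + (k + 1))) * c ^ j :=
    dist_succ_le_mul_pow_of_dist_succ_le_mul (x := fun j => x (j + (k + 1))) hc₀ fun j => by
      simpa only [add_right_comm] using hstep (j + (k + 1))
  calc dist (x (k + 1)) a
      ≤ dist (x (k + 1)) (x (k + 2)) / (1 - c) := by
        simpa only [zero_add, add_comm 1] using
          dist_le_of_le_geometric_of_tendsto₀ c _ hc₁ hgeom htail
    _ ≤ c * dist (x k) (x (k + 1)) / (1 - c) :=
        div_le_div_of_nonneg_right (hstep k) (sub_pos.2 hc₁).le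
    _ = c / (1 - c) * dist (x k) (x (k + 1)) := mul_div_right_comm ..

end LocalContraction

section Newton

variable {𝕜 E F : Type*} [NontriviallyNormedField 𝕜]
  [NormedAddCommGroup E] [NormedSpace 𝕜 E] [NormedAddCommGroup F] [NormedSpace 𝕜 F]
  {f : E → F} {V : E →L[𝕜] F} {W : F →L[𝕜] E} {s : Set E} {p : E} {β ε : ℝ}

theorem norm_sub_le_of_linear_approx_of_tendsto
    (hV : ∀ q ∈ s, ‖f q - f p - V (q - p)‖ ≤ ε * ‖q - p‖)
    {ι : Type*} {l : Filter ι} [l.NeBot] {u : ι → E} {a : E} {b : F} (ha : a ∈ s)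
    (hus : ∀ᶠ i in l, u i ∈ s) (hu : Tendsto u l (𝓝 a)) (hfu : Tendsto (f ∘ u) l (𝓝 b)) :
    ‖f a - b‖ ≤ 2 * ε * ‖a - p‖ := by
  have hb : ‖b - f p - V (a - p)‖ ≤ ε * ‖a - p‖ := by
    have hup : Tendsto (fun i => u i - p) l (𝓝 (a - p)) := hu.sub_const p
    exact le_of_tendsto_of_tendsto
      ((hfu.sub_const (f p)).sub ((V.continuous.tendsto _).comp hup)).norm
      (hup.norm.const_mul ε) (hus.mono fun i hi => hV (u i) hi)
  calc ‖f a - b‖ = ‖(f a - f p - V (a - p)) - (b - f p - V (a - p))‖ := by congr 1; abel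
    _ ≤ ε * ‖a - p‖ + ε * ‖a - p‖ := (norm_sub_le _ _).trans (add_le_add (hV a ha) hb)
    _ = 2 * ε * ‖a - p‖ := by ring

/-- The data of a Newton step at `p`: a linear map `V` approximating `f` at `p` up to the relative
error `ε` on `s`, with a right inverse `W` of norm at most `β`. A right inverse is enough for the
step `p ↦ p - W (f p)` to solve the linearized equation. -/
structure IsNewtonLinearization (f : E → F) (V : E →L[𝕜] F) (W : F →L[𝕜] E) (s : Set E) (p : E)
    (β ε : ℝ) : Prop where
  rightInverse : Function.RightInverse W V
  norm_inverse_le : ‖W‖ ≤ β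
  norm_sub_sub_le : ∀ q ∈ s, ‖f q - f p - V (q - p)‖ ≤ ε * ‖q - p‖

namespace IsNewtonLinearization

theorem norm_step_le (h : IsNewtonLinearization f V W s p β ε) :
    ‖p - W (f p) - p‖ ≤ β * ‖f p‖ := by
  rw [sub_sub_cancel_left, norm_neg]
  exact W.le_of_opNorm_le h.norm_inverse_le _

theorem norm_residual_le (h : IsNewtonLinearization f V W s p β ε) (hs : p - W (f p) ∈ s) :
    ‖f (p - W (f p))‖ ≤ ε * ‖p - W (f p) - p‖ := by
  have hsolves : V (p - W (f p) - p) = -f p := by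
    rw [sub_sub_cancel_left, map_neg, h.rightInverse]
  simpa only [hsolves, sub_neg_eq_add, sub_add_cancel] using h.norm_sub_sub_le _ hs

end IsNewtonLinearization

/-- `x` is a Newton sequence for `f` on `s`: as long as the iterates lie in `s`, they carry Newton
steps with common constants `β` and `ε`. Nothing is asked of `V k` and `W k` once `x k` has left
`s`. -/
structure IsNewtonSequenceOn (f : E → F) (x : ℕ → E) (V : ℕ → E →L[𝕜] F) (W : ℕ → F →L[𝕜] E)
    (s : Set E) (β ε : ℝ) : Prop where
  linearization : ∀ k, x k ∈ s → IsNewtonLinearization f (V k) (W k) s (x k) β ε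
  step : ∀ k, x (k + 1) = x k - W k (f (x k))

namespace IsNewtonSequenceOn

variable {x : ℕ → E} {V : ℕ → E →L[𝕜] F} {W : ℕ → F →L[𝕜] E}

theorem dist_succ_le (h : IsNewtonSequenceOn f x V W s β ε) {k : ℕ} (hk : x k ∈ s) :
    dist (x k) (x (k + 1)) ≤ β * ‖f (x k)‖ := by
  rw [dist_eq_norm', h.step]
  exact (h.linearization k hk).norm_step_le

theorem norm_apply_succ_le (h : IsNewtonSequenceOn f x V W s β ε) {k : ℕ} (hk : x k ∈ s)
    (hk' : x (k + 1) ∈ s) : ‖f (x (k + 1))‖ ≤ ε * dist (x k) (x (k + 1)) := by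
  rw [h.step] at hk'
  rw [dist_eq_norm', h.step]
  exact (h.linearization k hk).norm_residual_le hk'

theorem dist_succ_le_mul (h : IsNewtonSequenceOn f x V W s β ε) (hβ : 0 ≤ β) {k : ℕ}
    (hk : x k ∈ s) (hk' : x (k + 1) ∈ s) :
    dist (x (k + 1)) (x (k + 2)) ≤ ε * β * dist (x k) (x (k + 1)) :=
  calc dist (x (k + 1)) (x (k + 2)) ≤ β * ‖f (x (k + 1))‖ := h.dist_succ_le hk'
    _ ≤ β * (ε * dist (x k) (x (k + 1))) := by gcongr; exact h.norm_apply_succ_le hk hk'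
    _ = ε * β * dist (x k) (x (k + 1)) := by ring

theorem tendsto_apply_zero (h : IsNewtonSequenceOn f x V W s β ε) (hs : ∀ k, x k ∈ s)
    (hx : CauchySeq x) : Tendsto (f ∘ x) atTop (𝓝 0) := by
  have hpairs : Tendsto (fun k : ℕ => (k, k + 1)) atTop atTop := by
    rw [← prod_atTop_atTop_eq]
    exact tendsto_id.prodMk (tendsto_add_atTop_nat 1)
  have hdist : Tendsto (fun k => dist (x k) (x (k + 1))) atTop (𝓝 0) :=
    (cauchySeq_iff_tendsto_dist_atTop_0.1 hx).comp hpairs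
  rw [← tendsto_add_atTop_iff_nat 1]
  exact squeeze_zero_norm (fun k => h.norm_apply_succ_le (hs k) (hs (k + 1)))
    (by simpa only [mul_zero] using hdist.const_mul ε)

theorem apply_eq_zero_of_tendsto (h : IsNewtonSequenceOn f x V W s β ε) (hs : ∀ k, x k ∈ s)
    {a : E} (ha : a ∈ s) (hx : Tendsto x atTop (𝓝 a)) : f a = 0 := by
  have hbound : ∀ k, ‖f a‖ ≤ 2 * ε * ‖a - x k‖ := fun k => by
    simpa only [sub_zero] using norm_sub_le_of_linear_approx_of_tendsto
      (h.linearization k (hs k)).norm_sub_sub_le ha (.of_forall hs) hx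
      (h.tendsto_apply_zero hs hx.cauchySeq)
  have hlim : Tendsto (fun k => 2 * ε * ‖a - x k‖) atTop (𝓝 0) := by
    simpa only [sub_self, norm_zero, mul_zero] using (hx.const_sub a).norm.const_mul (2 * ε)
  exact norm_le_zero_iff.1 (ge_of_tendsto' hlim hbound)

theorem exists_zero [CompleteSpace E] {r : ℝ}
    (h : IsNewtonSequenceOn f x V W (closedBall (x 0) r) β ε) (hβ : 0 ≤ β) (hε : 0 ≤ ε)
    (hεβ : ε * β < 1) (hinit : β / (1 - ε * β) * ‖f (x 0)‖ ≤ r) :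
    ∃ a ∈ closedBall (x 0) r, f a = 0 ∧ Tendsto x atTop (𝓝 a) ∧
      ∀ k, dist (x (k + 1)) a ≤ ε * β / (1 - ε * β) * dist (x k) (x (k + 1)) := by
  have hc₀ : 0 ≤ ε * β := mul_nonneg hε hβ
  have hr : 0 ≤ r :=
    (mul_nonneg (div_nonneg hβ (sub_pos.2 hεβ).le) (norm_nonneg _)).trans hinit
  have hfirst : dist (x 0) (x 1) ≤ (1 - ε * β) * r :=
    calc dist (x 0) (x 1) ≤ β * ‖f (x 0)‖ := h.dist_succ_le (mem_closedBall_self hr)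
      _ ≤ (1 - ε * β) * r := by rwa [div_mul_eq_mul_div, div_le_iff₀' (sub_pos.2 hεβ)] at hinit
  have hball : ∀ k, x k ∈ closedBall (x 0) r :=
    mem_closedBall_of_dist_succ_le_mul hc₀ hεβ hfirst fun _ => h.dist_succ_le_mul hβ
  have hstep : ∀ k, dist (x (k + 1)) (x (k + 2)) ≤ ε * β * dist (x k) (x (k + 1)) :=
    fun k => h.dist_succ_le_mul hβ (hball k) (hball (k + 1))
  obtain ⟨a, ha⟩ := cauchySeq_tendsto_of_complete (cauchySeq_of_dist_succ_le_mul hc₀ hεβ hstep)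
  have hmem : a ∈ closedBall (x 0) r := isClosed_closedBall.mem_of_tendsto ha (.of_forall hball)
  exact ⟨a, hmem, h.apply_eq_zero_of_tendsto hball hmem ha, ha,
    dist_succ_le_of_dist_succ_le_mul_of_tendsto hc₀ hεβ hstep ha⟩

end IsNewtonSequenceOn

theorem div_one_sub_mul_div_one_sub {K : Type*} [Field K] {a b : K} (h : 1 - b * a ≠ 0) :
    a / (1 - b * a) / (1 - b * (a / (1 - b * a))) = a / (1 - 2 * b * a) := by
  have hden : 1 - b * (a / (1 - b * a)) = (1 - 2 * b * a) / (1 - b * a) := by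
    field_simp
    ring
  rw [hden, div_div_div_cancel_right₀ h]

theorem newton_kantorovich_error_estimate_general [CompleteSpace E] {x : ℕ → E}
    {V : ℕ → E →L[𝕜] F} {W : ℕ → F →L[𝕜] E} {lam r : ℝ} (hlam : 0 ≤ lam) (hε : 0 ≤ ε)
    (hεlam : ε * lam < 1 / 2) (hinit : lam / (1 - 2 * ε * lam) * ‖f (x 0)‖ ≤ r)
    (h : IsNewtonSequenceOn f x V W (closedBall (x 0) r) (lam / (1 - ε * lam)) ε) :
    ∃ xs ∈ closedBall (x 0) r, f xs = 0 ∧ Tendsto x atTop (𝓝 xs) ∧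
      ∀ k, ‖x (k + 1) - xs‖ ≤ ε * lam / (1 - 2 * ε * lam) * ‖x (k + 1) - x k‖ := by
  have hpos : 0 < 1 - ε * lam := by linarith
  have hcontr : ε * (lam / (1 - ε * lam)) < 1 := by
    rw [← mul_div_assoc, div_lt_one hpos]
    linarith
  have hfactor := div_one_sub_mul_div_one_sub hpos.ne'
  simpa only [mul_div_assoc, hfactor, dist_eq_norm, norm_sub_rev (x _) (x (_ + 1))] using
    h.exists_zero (div_nonneg hlam hpos.le) hε hcontr (hfactor ▸ hinit)

end Newton

/-- Error estimate of the Kantorovich-type theorem (Euclidean case of Theorem 4.4): the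
Newton sequence converges to the zero `x*` of `f` in the closed ball with
`‖x_k - x*‖ ≤ (ελ/(1-2ελ))·‖x_k - x_{k-1}‖` for every `k ≥ 1`. -/
theorem newton_kantorovich_error_estimate {n : ℕ}
    (f : EuclideanSpace ℝ (Fin n) → EuclideanSpace ℝ (Fin n)) (hf : LocallyLipschitz f)
    (x₀ : EuclideanSpace ℝ (Fin n)) (lam ε δbar δ : ℝ)
    (hlam : 0 < lam) (hε : 0 < ε) (hδbar : 0 < δbar) (hδ : δbar < δ)
    (hεlam : ε * lam < 1 / 2)
    (hinit : lam / (1 - 2 * ε * lam) * ‖f x₀‖ ≤ δbar)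
    (hyp : ∀ p ∈ ball x₀ δ, ∀ V ∈ clarkeJacobian f p,
      IsUnit V ∧ ‖Ring.inverse V‖ ≤ lam / (1 - ε * lam) ∧
      ∀ q ∈ ball x₀ δ, ‖f q - f p - V (q - p)‖ ≤ ε * ‖q - p‖) :
    ∀ (x : ℕ → EuclideanSpace ℝ (Fin n))
      (V : ℕ → (EuclideanSpace ℝ (Fin n) →L[ℝ] EuclideanSpace ℝ (Fin n))),
      x 0 = x₀ → (∀ k, V k ∈ clarkeJacobian f (x k)) →
      (∀ k, x (k + 1) = x k - Ring.inverse (V k) (f (x k))) →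
      ∃ xs ∈ closedBall x₀ δbar, f xs = 0 ∧ Tendsto x atTop (𝓝 xs) ∧
        ∀ k, ‖x (k + 1) - xs‖ ≤ ε * lam / (1 - 2 * ε * lam) * ‖x (k + 1) - x k‖ := by
  rintro x V rfl hV hx
  have hsub : closedBall (x 0) δbar ⊆ ball (x 0) δ := closedBall_subset_ball hδ
  refine newton_kantorovich_error_estimate_general (V := V) hlam.le hε.le hεlam hinit
    ⟨fun k hk => ?_, hx⟩
  obtain ⟨hunit, hnorm, happrox⟩ := hyp (x k) (hsub hk) (V k) (hV k)
  exact ⟨DFunLike.congr_fun (Ring.mul_inverse_cancel _ hunit), hnorm,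
    fun q hq => happrox q (hsub hq)⟩
end
end

section
/- Under the hypotheses of the Kantorovich-type theorem (f : ℝⁿ → ℝⁿ locally Lipschitz, x₀ ∈ ℝⁿ, constants λ > 0, ε > 0, 0 < δ̄ < δ with ελ < 1/2, (λ/(1 − 2ελ))·‖f(x₀)‖ ≤ δ̄, and for all p, q ∈ B_δ(x₀), V ∈ ∂f(p): V invertible, ‖V⁻¹‖ ≤ λ/(1 − ελ), ‖f(q) − f(p) − V(q − p)‖ ≤ ε‖q − p‖), every Newton sequence x_{k+1} = x_k − V_k⁻¹ f(x_k), V_k ∈ ∂f(x_k), starting at x₀ satisfies the step-length bound ‖x_{k+1} − x_k‖ ≤ (ελ/(1 − ελ))^k · δ̄ · (1 − 2ελ)/(1 − ελ) for all k ≥ 0; in particular {x_k} is a Cauchy sequence. -/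
open Metric Filter Topology

noncomputable section

/-!
If `W` is a right inverse of `V` and `q = p - W (f p)` is a Newton step, then `f q` equals the
linearization error `f q - f p - V (q - p)`, so the next step `W' (f q)` has length at most
`‖W'‖ * ε * ‖q - p‖`. With `‖W'‖ ≤ λ / (1 - ελ)` the step lengths decrease by the factor
`r = ελ / (1 - ελ) < 1`. Since `1 - r = (1 - 2ελ) / (1 - ελ)`, the first step is at most
`(1 - r) δ̄`; hence the steps sum to at most `δ̄`, and the iterates never leave the ball on which
these estimates hold.
-/

section GeometricSteps

variable {X : Type*} [PseudoMetricSpace X] {x : ℕ → X} {r d : ℝ}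

theorem mem_closedBall_of_dist_succ_le_geometric (hr : 0 ≤ r) (hd : 0 ≤ d) {n : ℕ}
    (h : ∀ k < n, dist (x k) (x (k + 1)) ≤ d * (1 - r) * r ^ k) :
    x n ∈ closedBall (x 0) d := by
  rw [mem_closedBall']
  calc dist (x 0) (x n) ≤ ∑ k ∈ Finset.range n, d * (1 - r) * r ^ k :=
        dist_le_range_sum_of_dist_le n fun {k} hk => h k hk
    _ = d * (1 - r ^ n) := by rw [← Finset.mul_sum, mul_assoc, mul_neg_geom_sum]
    _ ≤ d := mul_le_of_le_one_right hd (sub_le_self 1 (pow_nonneg hr n))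

theorem dist_succ_le_geometric_of_contracting_on_closedBall (hr₀ : 0 ≤ r) (hr₁ : r < 1)
    (hfirst : dist (x 0) (x 1) ≤ d * (1 - r))
    (hcontr : ∀ k, x k ∈ closedBall (x 0) d → x (k + 1) ∈ closedBall (x 0) d →
      dist (x (k + 1)) (x (k + 2)) ≤ r * dist (x k) (x (k + 1)))
    (n : ℕ) : dist (x n) (x (n + 1)) ≤ d * (1 - r) * r ^ n := by
  have hd : 0 ≤ d := nonneg_of_mul_nonneg_left (dist_nonneg.trans hfirst) (sub_pos.2 hr₁)
  induction n using Nat.strong_induction_on with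
  | h n ih =>
    cases n with
    | zero => simpa using hfirst
    | succ k =>
      have hk : x k ∈ closedBall (x 0) d :=
        mem_closedBall_of_dist_succ_le_geometric hr₀ hd fun j hj => ih j (by lia)
      have hk' : x (k + 1) ∈ closedBall (x 0) d :=
        mem_closedBall_of_dist_succ_le_geometric hr₀ hd ih
      calc dist (x (k + 1)) (x (k + 2)) ≤ r * dist (x k) (x (k + 1)) := hcontr k hk hk'
        _ ≤ r * (d * (1 - r) * r ^ k) := by gcongr; exact ih k k.lt_succ_self
        _ = d * (1 - r) * r ^ (k + 1) := by ring

end GeometricSteps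

section NewtonStep

variable {𝕜 E F : Type*} [NontriviallyNormedField 𝕜]
  [SeminormedAddCommGroup E] [NormedSpace 𝕜 E] [SeminormedAddCommGroup F] [NormedSpace 𝕜 F]

theorem linearization_error_newton_step (f : E → F) {V : E →L[𝕜] F} {W : F →L[𝕜] E}
    (hVW : Function.RightInverse W V) (p : E) :
    f (p - W (f p)) - f p - V (p - W (f p) - p) = f (p - W (f p)) := by
  rw [sub_sub_cancel_left, map_neg, hVW (f p)]
  abel

theorem norm_newton_step_le {f : E → F} {V : E →L[𝕜] F} {W W' : F →L[𝕜] E} {p q : E} {β ε : ℝ}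
    (hVW : Function.RightInverse W V) (hq : q = p - W (f p)) (hW' : ‖W'‖ ≤ β)
    (happrox : ‖f q - f p - V (q - p)‖ ≤ ε * ‖q - p‖) :
    ‖W' (f q)‖ ≤ β * ε * ‖q - p‖ := by
  have hfq : ‖f q‖ ≤ ε * ‖q - p‖ := by
    subst hq
    rwa [linearization_error_newton_step f hVW p] at happrox
  calc ‖W' (f q)‖ ≤ β * (ε * ‖q - p‖) := W'.le_of_opNorm_le_of_le hW' hfq
    _ = β * ε * ‖q - p‖ := (mul_assoc _ _ _).symm

theorem dist_newton_succ_le_geometric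
    {f : E → F} {x : ℕ → E} {V : ℕ → E →L[𝕜] F} {W : ℕ → F →L[𝕜] E} {β ε d : ℝ}
    (hβ : 0 ≤ β) (hε : 0 ≤ ε) (hβε : β * ε < 1)
    (hinit : β * ‖f (x 0)‖ ≤ d * (1 - β * ε))
    (hstep : ∀ k, x (k + 1) = x k - W k (f (x k)))
    (hyp : ∀ k, x k ∈ closedBall (x 0) d →
      Function.RightInverse (W k) (V k) ∧ ‖W k‖ ≤ β ∧
      ∀ q ∈ closedBall (x 0) d, ‖f q - f (x k) - V k (q - x k)‖ ≤ ε * ‖q - x k‖)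
    (k : ℕ) : dist (x k) (x (k + 1)) ≤ d * (1 - β * ε) * (β * ε) ^ k := by
  have dist_eq (k : ℕ) : dist (x k) (x (k + 1)) = ‖W k (f (x k))‖ := by
    rw [hstep, dist_self_sub_right]
  refine dist_succ_le_geometric_of_contracting_on_closedBall (mul_nonneg hβ hε) hβε ?first
    (fun k hk hk' => ?contr) k
  case first =>
    have hd : 0 ≤ d := nonneg_of_mul_nonneg_left ((by positivity : 0 ≤ β * ‖f (x 0)‖).trans hinit)
      (sub_pos.2 hβε)
    obtain ⟨-, hW, -⟩ := hyp 0 (mem_closedBall_self hd)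
    exact (dist_eq 0).trans_le (((W 0).le_of_opNorm_le hW _).trans hinit)
  case contr =>
    obtain ⟨hVW, -, happrox⟩ := hyp k hk
    obtain ⟨-, hW', -⟩ := hyp (k + 1) hk'
    rw [dist_eq (k + 1), dist_eq_norm']
    exact norm_newton_step_le hVW (hstep k) hW' (happrox _ hk')

theorem newton_kantorovich_step_bound_general
    {f : E → F} {x : ℕ → E} {V : ℕ → E →L[𝕜] F} {W : ℕ → F →L[𝕜] E} {lam ε δbar : ℝ}
    (hlam : 0 ≤ lam) (hε : 0 ≤ ε) (hεlam : ε * lam < 1 / 2)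
    (hinit : lam / (1 - 2 * ε * lam) * ‖f (x 0)‖ ≤ δbar)
    (hstep : ∀ k, x (k + 1) = x k - W k (f (x k)))
    (hyp : ∀ k, x k ∈ closedBall (x 0) δbar →
      Function.RightInverse (W k) (V k) ∧ ‖W k‖ ≤ lam / (1 - ε * lam) ∧
      ∀ q ∈ closedBall (x 0) δbar, ‖f q - f (x k) - V k (q - x k)‖ ≤ ε * ‖q - x k‖) :
    (∀ k : ℕ, ‖x (k + 1) - x k‖ ≤
      (ε * lam / (1 - ε * lam)) ^ k * δbar * ((1 - 2 * ε * lam) / (1 - ε * lam))) ∧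
    CauchySeq x := by
  have hpos : 0 < 1 - ε * lam := by linarith
  have hpos₂ : 0 < 1 - 2 * ε * lam := by linarith
  have ratio_eq : lam / (1 - ε * lam) * ε = ε * lam / (1 - ε * lam) := by ring
  have one_sub_ratio :
      1 - lam / (1 - ε * lam) * ε = (1 - 2 * ε * lam) / (1 - ε * lam) := by
    rw [ratio_eq, one_sub_div hpos.ne']; ring
  have ratio_lt_one : lam / (1 - ε * lam) * ε < 1 := by
    rw [← sub_pos, one_sub_ratio]; positivity
  have hfirst : lam / (1 - ε * lam) * ‖f (x 0)‖ ≤ δbar * (1 - lam / (1 - ε * lam) * ε) := by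
    rw [one_sub_ratio]
    calc lam / (1 - ε * lam) * ‖f (x 0)‖
        = lam / (1 - 2 * ε * lam) * ‖f (x 0)‖ * ((1 - 2 * ε * lam) / (1 - ε * lam)) := by
          rw [mul_right_comm, div_mul_div_cancel₀ hpos₂.ne']
      _ ≤ δbar * ((1 - 2 * ε * lam) / (1 - ε * lam)) := by gcongr
  have hgeom := dist_newton_succ_le_geometric (by positivity) hε ratio_lt_one hfirst hstep hyp
  refine ⟨fun k => ?_, cauchySeq_of_le_geometric _ _ ratio_lt_one hgeom⟩
  rw [← dist_eq_norm', ← one_sub_ratio, ← ratio_eq]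
  exact (hgeom k).trans_eq (by ring)

end NewtonStep

/-- Step-length bound in the Kantorovich-type theorem (inequality (eq:ikt) in the proof of
Theorem 4.4, Euclidean case): every Newton sequence starting at `x₀` satisfies
`‖x_{k+1} - x_k‖ ≤ (ελ/(1-ελ))^k · δ̄ · (1-2ελ)/(1-ελ)`; in particular it is Cauchy. -/
theorem newton_kantorovich_step_bound {n : ℕ}
    (f : EuclideanSpace ℝ (Fin n) → EuclideanSpace ℝ (Fin n)) (hf : LocallyLipschitz f)
    (x₀ : EuclideanSpace ℝ (Fin n)) (lam ε δbar δ : ℝ)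
    (hlam : 0 < lam) (hε : 0 < ε) (hδbar : 0 < δbar) (hδ : δbar < δ)
    (hεlam : ε * lam < 1 / 2)
    (hinit : lam / (1 - 2 * ε * lam) * ‖f x₀‖ ≤ δbar)
    (hyp : ∀ p ∈ ball x₀ δ, ∀ V ∈ clarkeJacobian f p,
      IsUnit V ∧ ‖Ring.inverse V‖ ≤ lam / (1 - ε * lam) ∧
      ∀ q ∈ ball x₀ δ, ‖f q - f p - V (q - p)‖ ≤ ε * ‖q - p‖) :
    ∀ (x : ℕ → EuclideanSpace ℝ (Fin n))
      (V : ℕ → (EuclideanSpace ℝ (Fin n) →L[ℝ] EuclideanSpace ℝ (Fin n))),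
      x 0 = x₀ → (∀ k, V k ∈ clarkeJacobian f (x k)) →
      (∀ k, x (k + 1) = x k - Ring.inverse (V k) (f (x k))) →
      (∀ k : ℕ, ‖x (k + 1) - x k‖ ≤
        (ε * lam / (1 - ε * lam)) ^ k * δbar * ((1 - 2 * ε * lam) / (1 - ε * lam))) ∧
      CauchySeq x := by
  rintro x V rfl hV hstep
  refine newton_kantorovich_step_bound_general (V := V) hlam.le hε.le hεlam hinit hstep
    fun k hk => ?_
  obtain ⟨hu, hinv, happrox⟩ := hyp (x k) (closedBall_subset_ball hδ hk) (V k) (hV k)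
  exact ⟨fun y => DFunLike.congr_fun (Ring.mul_inverse_cancel _ hu) y, hinv,
    fun q hq => happrox q (closedBall_subset_ball hδ hq)⟩
end
end
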